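/- arXiv:1011.5565 — 2 statements merged into one kernel-verified Lean document; each statement's English description precedes it below -/
import Mathlib

section
/- Let F be a field of characteristic zero, let n, d ≥ 1, and let V = (F^{n×n})^d with O(n) acting by simultaneous conjugation. Then the algebra of invariant polynomial functions F[V]^{O(n)} is generated, as an F-algebra, by the traces tr(B), where B ranges over all (nonempty) monomials in the generic matrices X₁,…,X_d and their transposes X₁ᵀ,…,X_dᵀ. -/
/-!
The proof is by induction on `n`, for the larger class of data consisting of matrices, vectors and
scalars (`OrthInv.Dat`), on which `O(n)` acts by `X ↦ gᵀ X g`, `v ↦ gᵀ v` and trivially. The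
claim is that every invariant polynomial function is a polynomial in the basic invariants
`tr w`, `v_i · w v_j` and the scalars, `w` running over words in the matrices and their
transposes. Since `F` is infinite, polynomials are treated as functions throughout.

*Restriction to a stabiliser.* The subgroup `1 ⊕ O(n)` of `O(n+1)` fixes `e = e₀`, and under it a
matrix splits into a block, two vectors and a scalar, a vector into a vector and a scalar. By
induction an `O(n+1)`-invariant `f` is a polynomial in the basic invariants of these pieces, and
each of those is a polynomial in the basic invariants of the original data together with the
additional vector `e` (`OrthInv.genE_of_res`): the projection `1 - e eᵀ` is expanded inside words.
So `f(x) = Q(x, e)` with `Q` a polynomial in basic invariants.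

*Averaging.* By invariance `f(x) = Q(x, u)` for every `u` in the orbit of `e`. Homogenising, and
using both `u` and `-u`, one gets `f(x) (u · u)^N = p(x, u)` with `p` in the algebra `OrthInv.Fam`
generated by basic invariants of `x` and by the forms `u · w v_j` and `u · w u`. This is an
identity of polynomials in `u`: on each line parallel to `e` there are infinitely many `u` that
are multiples of a point of the orbit, by the rational parametrisation of the conic
`ρ² = k + s²` (`OrthInv.eq_zero_of_sphere`). The algebra `Fam` is stable under the Laplacian in
`u`, because the gradients of its generators have inner products in `Fam`. Applying the Laplacian
`N` times and putting `u = 0` gives a nonzero multiple of `f(x)` on the left, and a polynomial in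
basic invariants on the right (`OrthInv.mem_gen_of_unit_vector`).
-/

open Polynomial Matrix MvPolynomial

/-- `sigma X t` is the coefficient `σ_t(X)` of `λ^(n-t)` in `det(X + λ·E)`,
with the convention `σ_t(X) = 0` for `t > n`. -/
noncomputable def sigma {n : ℕ} {R : Type*} [CommRing R]
    (X : Matrix (Fin n) (Fin n) R) (t : ℕ) : R :=
  if t ≤ n then
    ((X.map Polynomial.C + (Polynomial.X : Polynomial R) • 1).det).coeff (n - t)
  else 0

/-- The `k`-th generic `n × n` matrix, whose `(i,j)` entry is the variable `x_{ij}(k)`. -/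
noncomputable def genMat (F : Type*) [CommRing F] (n d : ℕ) (k : Fin d) :
    Matrix (Fin n) (Fin n) (MvPolynomial (Fin d × Fin n × Fin n) F) :=
  Matrix.of fun i j => MvPolynomial.X (k, i, j)

/-- The matrix associated to a letter: `X_k` or `X_kᵀ`. -/
noncomputable def letterMat (F : Type*) [CommRing F] (n d : ℕ) (β : Fin d × Bool) :
    Matrix (Fin n) (Fin n) (MvPolynomial (Fin d × Fin n × Fin n) F) :=
  if β.2 then (genMat F n d β.1)ᵀ else genMat F n d β.1

/-- The matrix `X_{β₁} ⋯ X_{β_p}` associated to a word `w = β₁ ⋯ β_p` in the letters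
`x₁, …, x_d, x₁ᵀ, …, x_dᵀ`. -/
noncomputable def wordMat (F : Type*) [CommRing F] (n d : ℕ) (w : List (Fin d × Bool)) :
    Matrix (Fin n) (Fin n) (MvPolynomial (Fin d × Fin n × Fin n) F) :=
  (w.map (letterMat F n d)).prod

/-- The action of `g ∈ O(n)` on the coordinate ring `F[V]`:
the variable `x_{ij}(k)` is sent to the `(i,j)` entry of `g⁻¹ X_k g = gᵀ X_k g`. -/
noncomputable def act (F : Type*) [CommRing F] (n d : ℕ) (g : Matrix (Fin n) (Fin n) F) :
    MvPolynomial (Fin d × Fin n × Fin n) F →ₐ[F] MvPolynomial (Fin d × Fin n × Fin n) F :=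
  MvPolynomial.aeval fun v : Fin d × Fin n × Fin n =>
    ((gᵀ.map (MvPolynomial.C) * genMat F n d v.1 * g.map (MvPolynomial.C) :
        Matrix (Fin n) (Fin n) (MvPolynomial (Fin d × Fin n × Fin n) F)) : Matrix _ _ _)
      v.2.1 v.2.2

/-- The set of polynomial functions on `V = (F^{n×n})^d` invariant under the simultaneous
conjugation action of the orthogonal group `O(n)`. -/
def matrixInvariants (F : Type*) [CommRing F] (n d : ℕ) :
    Set (MvPolynomial (Fin d × Fin n × Fin n) F) :=
  {f | ∀ g : Matrix (Fin n) (Fin n) F, g * gᵀ = 1 → act F n d g f = f}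

namespace OrthInv

set_option linter.unusedSectionVars false

/-! ### Data, words and basic invariants -/

/-- Tuples of `ι × ι` matrices, vectors in `F^ι` and scalars. -/
structure Dat (F K J T ι : Type*) where
  mat : K → Matrix ι ι F
  vec : J → ι → F
  sc : T → F

/-- The matrix `X_k` or `X_kᵀ` attached to a letter. -/
def letter {F K ι : Type*} (X : K → Matrix ι ι F) (β : K × Bool) : Matrix ι ι F :=
  if β.2 then (X β.1)ᵀ else X β.1

/-- The product of the letters of a word. -/
def word {F K ι : Type*} [CommRing F] [Fintype ι] [DecidableEq ι]
    (X : K → Matrix ι ι F) (w : List (K × Bool)) : Matrix ι ι F :=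
  (w.map (letter X)).prod

section Words

variable {F K ι : Type*} [CommRing F] [Fintype ι] [DecidableEq ι] (X : K → Matrix ι ι F)

lemma word_nil : word X [] = 1 := by simp [word]

lemma word_cons (β : K × Bool) (w : List (K × Bool)) :
    word X (β :: w) = letter X β * word X w := by simp [word]

lemma word_append (w w' : List (K × Bool)) : word X (w ++ w') = word X w * word X w' := by
  simp [word]

lemma word_single (β : K × Bool) : word X [β] = letter X β := by simp [word]

lemma letter_not (β : K × Bool) : letter X (β.1, !β.2) = (letter X β)ᵀ := by
  obtain ⟨k, b⟩ := β
  cases b <;> simp [letter]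

/-- The word whose matrix is the transpose of that of `w`. -/
def wordT (w : List (K × Bool)) : List (K × Bool) := (w.map fun β => (β.1, !β.2)).reverse

lemma word_wordT (w : List (K × Bool)) : word X (wordT w) = (word X w)ᵀ := by
  induction w with
  | nil => simp [word, wordT]
  | cons β w ih =>
    have : wordT (β :: w) = wordT w ++ [(β.1, !β.2)] := by simp [wordT]
    rw [this, word_append, ih, word_single, letter_not, word_cons, transpose_mul]

lemma letter_conj {m : Type*} [Fintype m] (g : Matrix ι m F) (β : K × Bool) :
    letter (fun k => gᵀ * X k * g) β = gᵀ * letter X β * g := by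
  obtain ⟨k, b⟩ := β
  cases b <;> simp [letter, Matrix.mul_assoc]

lemma word_conj {g : Matrix ι ι F} (hg : g * gᵀ = 1) (w : List (K × Bool)) :
    word (fun k => gᵀ * X k * g) w = gᵀ * word X w * g := by
  induction w with
  | nil => simp [word_nil, mul_eq_one_comm.mp hg]
  | cons β w ih =>
    rw [word_cons, ih, letter_conj, word_cons]
    calc gᵀ * letter X β * g * (gᵀ * word X w * g)
        = gᵀ * letter X β * (g * gᵀ) * word X w * g := by simp only [Matrix.mul_assoc]
      _ = _ := by rw [hg]; simp only [Matrix.mul_assoc, Matrix.mul_one]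

end Words

/-- The action of `g` on data: `X ↦ gᵀ X g`, `v ↦ gᵀ v`, scalars are fixed. -/
def Dat.conj {F K J T ι : Type*} [CommRing F] [Fintype ι]
    (g : Matrix ι ι F) (x : Dat F K J T ι) : Dat F K J T ι where
  mat k := gᵀ * x.mat k * g
  vec j := gᵀ *ᵥ x.vec j
  sc := x.sc

/-- The coordinate functions on the space of data. -/
inductive IsCoord (F K J T ι : Type*) : (Dat F K J T ι → F) → Prop
  | mat (k : K) (i j : ι) : IsCoord F K J T ι fun x => x.mat k i j
  | vec (j : J) (i : ι) : IsCoord F K J T ι fun x => x.vec j i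
  | sc (t : T) : IsCoord F K J T ι fun x => x.sc t

/-- The basic invariants `tr w`, `v_i · w v_j` (`w` a word) and the scalar coordinates. -/
inductive IsGen (F K J T ι : Type*) [CommRing F] [Fintype ι] [DecidableEq ι] :
    (Dat F K J T ι → F) → Prop
  | tr (w : List (K × Bool)) : IsGen F K J T ι fun x => (word x.mat w).trace
  | dot (i j : J) (w : List (K × Bool)) :
      IsGen F K J T ι fun x => x.vec i ⬝ᵥ word x.mat w *ᵥ x.vec j
  | sc (t : T) : IsGen F K J T ι fun x => x.sc t

/-- The algebra of polynomial functions on the space of data. -/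
def pol (F K J T ι : Type*) [CommRing F] : Subalgebra F (Dat F K J T ι → F) :=
  Algebra.adjoin F {f | IsCoord F K J T ι f}

/-- The algebra generated by the basic invariants. -/
def gen (F K J T ι : Type*) [CommRing F] [Fintype ι] [DecidableEq ι] :
    Subalgebra F (Dat F K J T ι → F) :=
  Algebra.adjoin F {f | IsGen F K J T ι f}

lemma gen_invariant {F K J T ι : Type*} [CommRing F] [Fintype ι] [DecidableEq ι]
    {f : Dat F K J T ι → F} (hf : f ∈ gen F K J T ι) {g : Matrix ι ι F} (hg : g * gᵀ = 1)
    (x : Dat F K J T ι) : f (x.conj g) = f x := by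
  induction hf using Algebra.adjoin_induction with
  | mem f hf =>
    obtain w | ⟨i, j, w⟩ | t := hf
    · simp only [Dat.conj, word_conj _ hg]
      rw [trace_mul_comm, ← Matrix.mul_assoc, hg, Matrix.one_mul]
    · simp only [Dat.conj, word_conj _ hg]
      rw [mulVec_mulVec, Matrix.mul_assoc, hg, Matrix.mul_one, ← mulVec_mulVec,
        dotProduct_mulVec, vecMul_transpose, mulVec_mulVec, hg, one_mulVec]
    · rfl
  | algebraMap r => rfl
  | add f g _ _ h1 h2 => simp [h1, h2]
  | mul f g _ _ h1 h2 => simp [h1, h2]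

/-! ### The Laplacian in an auxiliary vector -/

section Laplace

variable {F ι : Type*} [Field F] [Fintype ι]

/-- The linear form `c · u` in the variable vector `u`. -/
noncomputable def lin (c : ι → F) : MvPolynomial ι F :=
  ∑ a, MvPolynomial.C (c a) * MvPolynomial.X a

/-- The quadratic form `u · M u` in the variable vector `u`. -/
noncomputable def quad (M : Matrix ι ι F) : MvPolynomial ι F :=
  ∑ a, MvPolynomial.X a * lin (M a)

/-- The carré du champ `∇p · ∇q`. -/
noncomputable def grad (p q : MvPolynomial ι F) : MvPolynomial ι F :=
  ∑ a, pderiv a p * pderiv a q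

/-- The Laplacian. -/
noncomputable def lap (p : MvPolynomial ι F) : MvPolynomial ι F :=
  ∑ a, pderiv a (pderiv a p)

lemma lin_add (c c' : ι → F) : lin (c + c') = lin c + lin c' := by
  simp [lin, add_mul, Finset.sum_add_distrib]

lemma quad_add (M M' : Matrix ι ι F) : quad (M + M') = quad M + quad M' := by
  simp only [quad, ← Finset.sum_add_distrib, ← mul_add, ← lin_add]
  rfl

lemma grad_comm (p q : MvPolynomial ι F) : grad p q = grad q p := by
  simp [grad, mul_comm]

lemma grad_add (p q r : MvPolynomial ι F) : grad p (q + r) = grad p q + grad p r := by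
  simp [grad, mul_add, Finset.sum_add_distrib]

lemma grad_mul (p q r : MvPolynomial ι F) : grad p (q * r) = q * grad p r + r * grad p q := by
  simp only [grad, Derivation.leibniz, smul_eq_mul, Finset.mul_sum, ← Finset.sum_add_distrib]
  exact Finset.sum_congr rfl fun _ _ => by ring

lemma grad_C (p : MvPolynomial ι F) (r : F) : grad p (MvPolynomial.C r) = 0 := by simp [grad]

lemma lap_add (p q : MvPolynomial ι F) : lap (p + q) = lap p + lap q := by
  simp [lap, Finset.sum_add_distrib]

lemma lap_C (r : F) : lap (MvPolynomial.C r : MvPolynomial ι F) = 0 := by simp [lap]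

lemma lap_mul (p q : MvPolynomial ι F) : lap (p * q) = p * lap q + q * lap p + 2 * grad p q := by
  simp only [lap, grad, Derivation.leibniz, smul_eq_mul, map_add, Finset.mul_sum,
    ← Finset.sum_add_distrib]
  exact Finset.sum_congr rfl fun _ _ => by ring

variable [DecidableEq ι]

lemma pderiv_lin (a : ι) (c : ι → F) : pderiv a (lin c) = MvPolynomial.C (c a) := by
  simp [lin, pderiv_X, Pi.single_apply]

lemma pderiv_quad (a : ι) (M : Matrix ι ι F) : pderiv a (quad M) = lin ((M + Mᵀ) a) := by
  have : lin ((M + Mᵀ) a) = lin (M a) + lin (Mᵀ a) := lin_add _ _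
  rw [this]
  simp only [quad, map_sum, Derivation.leibniz, pderiv_lin, pderiv_X, smul_eq_mul,
    Finset.sum_add_distrib]
  rw [add_comm]
  congr 1
  · simp [Pi.single_apply]
  · simp [lin, mul_comm]

lemma grad_lin_lin (c c' : ι → F) : grad (lin c) (lin c') = MvPolynomial.C (c ⬝ᵥ c') := by
  simp [grad, pderiv_lin, dotProduct]

lemma grad_lin_quad (c : ι → F) (M : Matrix ι ι F) :
    grad (lin c) (quad M) = lin ((M + Mᵀ) *ᵥ c) := by
  simp only [grad, pderiv_lin, pderiv_quad]
  simp only [lin, mulVec, dotProduct, map_sum, Finset.sum_mul,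
    Finset.mul_sum]
  rw [Finset.sum_comm]
  refine Finset.sum_congr rfl fun a _ => Finset.sum_congr rfl fun b _ => ?_
  simp only [Matrix.add_apply, transpose_apply, map_add, map_mul]
  ring

lemma grad_quad_quad (M M' : Matrix ι ι F) :
    grad (quad M) (quad M') = quad ((M + Mᵀ) * (M' + M'ᵀ)) := by
  simp only [grad, pderiv_quad]
  simp only [quad, lin, Matrix.mul_apply, map_sum, Finset.sum_mul,
    Finset.mul_sum]
  rw [Finset.sum_congr rfl fun _ _ => Finset.sum_comm, Finset.sum_comm,
    Finset.sum_congr rfl fun _ _ => Finset.sum_comm]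
  refine Finset.sum_congr rfl fun a _ => Finset.sum_congr rfl fun b _ =>
    Finset.sum_congr rfl fun c _ => ?_
  simp only [Matrix.add_apply, transpose_apply, map_add, map_mul]
  ring

lemma lap_lin (c : ι → F) : lap (lin c) = 0 := by simp [lap, pderiv_lin]

lemma lap_quad (M : Matrix ι ι F) : lap (quad M) = MvPolynomial.C (2 * M.trace) := by
  simp only [lap, pderiv_quad, pderiv_lin, trace, diag, ← map_sum, Finset.mul_sum]
  congr 1
  exact Finset.sum_congr rfl fun a _ => by simp; ring

lemma grad_pow (q p : MvPolynomial ι F) (N : ℕ) : grad q (p ^ (N + 1)) =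
    (N + 1 : MvPolynomial ι F) * p ^ N * grad q p := by
  induction N with
  | zero => simp
  | succ N ih =>
    rw [pow_succ, grad_mul, ih]
    push_cast
    ring

/-- `Δ |u|^{2(N+1)} = 2(N+1)(n + 2N) |u|^{2N}`. -/
lemma lap_pow (N : ℕ) : lap ((quad (1 : Matrix ι ι F)) ^ (N + 1)) =
    MvPolynomial.C (2 * (N + 1) * (Fintype.card ι + 2 * N) : F) * (quad (1 : Matrix ι ι F)) ^ N := by
  have hg : grad (quad (1 : Matrix ι ι F)) (quad 1) = 4 * quad (1 : Matrix ι ι F) := by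
    rw [grad_quad_quad]
    have : ((1 : Matrix ι ι F) + 1ᵀ) * (1 + 1ᵀ) = 1 + 1 + (1 + 1) := by
      simp [mul_add]
    rw [this, quad_add, quad_add]
    ring
  induction N with
  | zero => simp [lap_quad]
  | succ N ih =>
    rw [pow_succ, lap_mul, ih, grad_comm, grad_pow, hg, lap_quad, trace_one]
    simp only [map_mul, map_add, map_ofNat, map_natCast, map_one]
    push_cast
    ring

/-- Iterating the Laplacian turns `|u|^{2N}` into a nonzero constant. -/
lemma lap_iterate_pow [CharZero F] [Nonempty ι] (N : ℕ) :
    ∃ c : F, c ≠ 0 ∧ ∀ r : F, lap^[N] (MvPolynomial.C r * (quad (1 : Matrix ι ι F)) ^ N) = MvPolynomial.C (r * c) := by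
  induction N with
  | zero => exact ⟨1, one_ne_zero, fun r => by simp⟩
  | succ N ih =>
    obtain ⟨c, hc, h⟩ := ih
    refine ⟨(2 * (N + 1) * (Fintype.card ι + 2 * N) : F) * c, mul_ne_zero ?_ hc, fun r => ?_⟩
    · have : 0 < Fintype.card ι := Fintype.card_pos
      have h2 : (2 * (N + 1) * (Fintype.card ι + 2 * N) : ℕ) ≠ 0 := by positivity
      exact_mod_cast h2
    · rw [Function.iterate_succ_apply, lap_mul, lap_C, grad_comm, grad_C, lap_pow, mul_zero,
        mul_zero, add_zero, add_zero, ← mul_assoc, ← map_mul, h, mul_assoc]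

end Laplace

/-! ### Averaging over the sphere -/

section Average

variable {F K J T ι : Type*} [Field F] [Fintype ι] [DecidableEq ι]

/-- Adjoin one more vector `u` to the data, with index `none`. -/
def Dat.ext (x : Dat F K J T ι) (u : ι → F) : Dat F K (Option J) T ι where
  mat := x.mat
  vec j := j.elim u x.vec
  sc := x.sc

/-- Generators of the algebra `Fam` of families of polynomials in `u`. -/
inductive IsFam (F K J T ι : Type*) [Field F] [Fintype ι] [DecidableEq ι] :
    (Dat F K J T ι → MvPolynomial ι F) → Prop
  | const (a : Dat F K J T ι → F) (ha : a ∈ gen F K J T ι) :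
      IsFam F K J T ι fun x => MvPolynomial.C (a x)
  | lin (w : List (K × Bool)) (j : J) :
      IsFam F K J T ι fun x => lin (word x.mat w *ᵥ x.vec j)
  | quad (w : List (K × Bool)) : IsFam F K J T ι fun x => quad (word x.mat w)

/-- Families of polynomials in `u`, parametrised by the data, which are generated by the basic
invariants of the data and by the forms `u · w v_j` and `u · w u`. -/
noncomputable def Fam (F K J T ι : Type*) [Field F] [Fintype ι] [DecidableEq ι] :
    Subalgebra F (Dat F K J T ι → MvPolynomial ι F) :=
  Algebra.adjoin F {f | IsFam F K J T ι f}

lemma fam_const {a : Dat F K J T ι → F} (ha : a ∈ gen F K J T ι) :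
    (fun x => MvPolynomial.C (a x)) ∈ Fam F K J T ι :=
  Algebra.subset_adjoin (IsFam.const a ha)

lemma fam_lin (w : List (K × Bool)) (j : J) :
    (fun x : Dat F K J T ι => lin (word x.mat w *ᵥ x.vec j)) ∈ Fam F K J T ι :=
  Algebra.subset_adjoin (IsFam.lin w j)

lemma fam_quad (w : List (K × Bool)) :
    (fun x : Dat F K J T ι => quad (word x.mat w)) ∈ Fam F K J T ι :=
  Algebra.subset_adjoin (IsFam.quad w)

lemma gen_tr (w : List (K × Bool)) :
    (fun x : Dat F K J T ι => (word x.mat w).trace) ∈ gen F K J T ι :=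
  Algebra.subset_adjoin (IsGen.tr w)

lemma gen_dot (i j : J) (w : List (K × Bool)) :
    (fun x : Dat F K J T ι => x.vec i ⬝ᵥ word x.mat w *ᵥ x.vec j) ∈ gen F K J T ι :=
  Algebra.subset_adjoin (IsGen.dot i j w)

lemma gen_sc (t : T) : (fun x : Dat F K J T ι => x.sc t) ∈ gen F K J T ι :=
  Algebra.subset_adjoin (IsGen.sc t)

/-- `∇(u · w v_j) · ∇(u · w' u) = u · (w' + w'ᵀ) w v_j`. -/
lemma fam_lin_quad (w w' : List (K × Bool)) (j : J) :
    (fun x : Dat F K J T ι => grad (lin (word x.mat w *ᵥ x.vec j)) (quad (word x.mat w'))) ∈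
      Fam F K J T ι := by
  have h := add_mem (fam_lin (F := F) (T := T) (ι := ι) (w' ++ w) j) (fam_lin (wordT w' ++ w) j)
  convert h using 1
  funext x
  simp [grad_lin_quad, word_append, word_wordT, ← lin_add, ← add_mulVec, add_mul]

lemma fam_grad_gen {p q : Dat F K J T ι → MvPolynomial ι F} (hp : IsFam F K J T ι p)
    (hq : IsFam F K J T ι q) : (fun x => grad (p x) (q x)) ∈ Fam F K J T ι := by
  obtain ⟨a, ha⟩ | ⟨w, j⟩ | w := hp
  · simp only [grad_comm (MvPolynomial.C _), grad_C]
    exact zero_mem _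
  · obtain ⟨a, ha⟩ | ⟨w', j'⟩ | w' := hq
    · simp only [grad_C]
      exact zero_mem _
    · simp only [grad_lin_lin]
      refine fam_const ?_
      convert gen_dot (F := F) (T := T) (ι := ι) j j' (wordT w ++ w') using 2 with x
      rw [word_append, word_wordT, ← mulVec_mulVec, dotProduct_mulVec _ (_)ᵀ, vecMul_transpose]
    · exact fam_lin_quad w w' j
  · obtain ⟨a, ha⟩ | ⟨w', j'⟩ | w' := hq
    · simp only [grad_C]
      exact zero_mem _
    · simp only [grad_comm (quad _)]
      exact fam_lin_quad w' w j'
    · have h := add_mem (add_mem (fam_quad (F := F) (J := J) (T := T) (ι := ι) (w ++ w'))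
        (fam_quad (w ++ wordT w')))
        (add_mem (fam_quad (wordT w ++ w')) (fam_quad (wordT w ++ wordT w')))
      convert h using 1
      funext x
      simp [grad_quad_quad, word_append, word_wordT, ← quad_add, add_mul, mul_add]
      congr 1
      abel

lemma fam_grad {p q : Dat F K J T ι → MvPolynomial ι F} (hp : p ∈ Fam F K J T ι)
    (hq : q ∈ Fam F K J T ι) : (fun x => grad (p x) (q x)) ∈ Fam F K J T ι := by
  -- `∇p · ∇q` is a derivation in each argument, so the generators suffice
  have key : ∀ p : Dat F K J T ι → MvPolynomial ι F,
      (∀ q, IsFam F K J T ι q → (fun x => grad (p x) (q x)) ∈ Fam F K J T ι) →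
      ∀ q ∈ Fam F K J T ι, (fun x => grad (p x) (q x)) ∈ Fam F K J T ι := by
    intro p hp q hq
    induction hq using Algebra.adjoin_induction with
    | mem q hq => exact hp q hq
    | algebraMap r =>
      convert zero_mem (Fam F K J T ι) using 1
      funext x
      exact grad_C _ _
    | add q r _ _ h1 h2 =>
      convert add_mem h1 h2 using 1
      funext x
      exact grad_add _ _ _
    | mul q r hq hr h1 h2 =>
      change q ∈ Fam F K J T ι at hq
      change r ∈ Fam F K J T ι at hr
      convert add_mem (mul_mem hq h2) (mul_mem hr h1) using 1
      funext x
      exact grad_mul _ _ _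
  refine key p (fun q hq => ?_) q hq
  simp only [grad_comm (p _)]
  exact key q (fun r hr => fam_grad_gen hq hr) p hp

/-- The algebra `Fam` is stable under the Laplacian in `u`. -/
lemma fam_lap {p : Dat F K J T ι → MvPolynomial ι F} (hp : p ∈ Fam F K J T ι) :
    (fun x => lap (p x)) ∈ Fam F K J T ι := by
  induction hp using Algebra.adjoin_induction with
  | mem p hp =>
    obtain ⟨a, ha⟩ | ⟨w, j⟩ | w := hp
    · simp only [lap_C]
      exact zero_mem _
    · simp only [lap_lin]
      exact zero_mem _
    · simp only [lap_quad]
      refine fam_const ?_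
      convert add_mem (gen_tr (F := F) (J := J) (T := T) (ι := ι) w) (gen_tr w) using 1
      funext x
      exact two_mul _
  | algebraMap r =>
    convert zero_mem (Fam F K J T ι) using 1
    funext x
    exact lap_C _
  | add q r _ _ h1 h2 =>
    convert add_mem h1 h2 using 1
    funext x
    exact lap_add _ _
  | mul q r hq hr h1 h2 =>
    change q ∈ Fam F K J T ι at hq
    change r ∈ Fam F K J T ι at hr
    have h3 := fam_grad hq hr
    convert add_mem (add_mem (mul_mem hq h2) (mul_mem hr h1)) (add_mem h3 h3) using 1
    funext x
    simp [lap_mul, two_mul]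

lemma fam_lap_iterate {p : Dat F K J T ι → MvPolynomial ι F} (hp : p ∈ Fam F K J T ι) (N : ℕ) :
    (fun x => lap^[N] (p x)) ∈ Fam F K J T ι := by
  induction N with
  | zero => simpa using hp
  | succ N ih => simpa only [Function.iterate_succ_apply'] using fam_lap ih

lemma eval_lin (u c : ι → F) : eval u (lin c) = u ⬝ᵥ c := by
  simp [lin, dotProduct, mul_comm]

lemma eval_quad (u : ι → F) (M : Matrix ι ι F) : eval u (quad M) = u ⬝ᵥ M *ᵥ u := by
  simp only [quad, map_sum, map_mul, MvPolynomial.eval_X, eval_lin, dotProduct_comm u (M _)]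
  rfl

lemma fam_eval_zero {p : Dat F K J T ι → MvPolynomial ι F} (hp : p ∈ Fam F K J T ι) :
    (fun x => eval 0 (p x)) ∈ gen F K J T ι := by
  induction hp using Algebra.adjoin_induction with
  | mem p hp =>
    obtain ⟨a, ha⟩ | ⟨w, j⟩ | w := hp
    · simpa using ha
    · simp only [eval_lin, zero_dotProduct]
      exact zero_mem _
    · simp only [eval_quad, zero_dotProduct]
      exact zero_mem _
  | algebraMap r =>
    convert algebraMap_mem (gen F K J T ι) r using 1
    funext x
    exact eval_C _
  | add q r _ _ h1 h2 =>
    convert add_mem h1 h2 using 1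
    funext x
    simp
  | mul q r _ _ h1 h2 =>
    convert mul_mem h1 h2 using 1
    funext x
    simp

/-- Clearing denominators in `Q(x, u/ρ)`, where `ρ² = u · u`. -/
lemma gen_homogenize {Q : Dat F K (Option J) T ι → F} (hQ : Q ∈ gen F K (Option J) T ι) :
    ∃ N : ℕ, ∃ p₀ ∈ Fam F K J T ι, ∃ p₁ ∈ Fam F K J T ι,
      ∀ (x : Dat F K J T ι) (u : ι → F) (ρ : F), ρ ≠ 0 → ρ ^ 2 = u ⬝ᵥ u →
        Q (x.ext (ρ⁻¹ • u)) * (ρ ^ 2) ^ N = eval u (p₀ x) + ρ * eval u (p₁ x) := by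
  have hR : (fun _ : Dat F K J T ι => quad (1 : Matrix ι ι F)) ∈ Fam F K J T ι := by
    simpa [word_nil] using fam_quad (F := F) (K := K) (J := J) (T := T) (ι := ι) []
  have heR : ∀ u : ι → F, eval u (quad (1 : Matrix ι ι F)) = u ⬝ᵥ u := by simp [eval_quad]
  induction hQ using Algebra.adjoin_induction with
  | mem Q hQ =>
    obtain w | ⟨i, j, w⟩ | t := hQ
    · exact ⟨0, _, fam_const (gen_tr w), 0, zero_mem _, fun x u ρ _ _ => by simp [Dat.ext]⟩
    · rcases i with _ | i <;> rcases j with _ | j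
      · refine ⟨1, _, fam_quad w, 0, zero_mem _, fun x u ρ h _ => ?_⟩
        simp [Dat.ext, eval_quad, mulVec_smul]
        field_simp
      · refine ⟨1, 0, zero_mem _, _, fam_lin w j, fun x u ρ h _ => ?_⟩
        simp [Dat.ext, eval_lin]
        field_simp
      · refine ⟨1, 0, zero_mem _, _, fam_lin (wordT w) i, fun x u ρ h _ => ?_⟩
        simp [Dat.ext, eval_lin, mulVec_smul, word_wordT]
        rw [dotProduct_mulVec, ← mulVec_transpose, dotProduct_comm]
        field_simp
      · exact ⟨0, _, fam_const (gen_dot i j w), 0, zero_mem _, fun x u ρ _ _ => by simp [Dat.ext]⟩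
    · exact ⟨0, _, fam_const (gen_sc t), 0, zero_mem _, fun x u ρ _ _ => by simp [Dat.ext]⟩
  | algebraMap r =>
    exact ⟨0, _, fam_const (algebraMap_mem _ r), 0, zero_mem _, fun x u ρ _ _ => by simp⟩
  | add Q Q' _ _ h1 h2 =>
    obtain ⟨N, p₀, hp₀, p₁, hp₁, h⟩ := h1
    obtain ⟨N', q₀, hq₀, q₁, hq₁, h'⟩ := h2
    refine ⟨N + N', _, add_mem (mul_mem (pow_mem hR N') hp₀) (mul_mem (pow_mem hR N) hq₀),
      _, add_mem (mul_mem (pow_mem hR N') hp₁) (mul_mem (pow_mem hR N) hq₁),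
      fun x u ρ hρ hu => ?_⟩
    simp only [Pi.add_apply, Pi.mul_apply, Pi.pow_apply, map_add, map_mul, map_pow, heR, ← hu]
    linear_combination (ρ ^ 2) ^ N' * h x u ρ hρ hu + (ρ ^ 2) ^ N * h' x u ρ hρ hu
  | mul Q Q' _ _ h1 h2 =>
    obtain ⟨N, p₀, hp₀, p₁, hp₁, h⟩ := h1
    obtain ⟨N', q₀, hq₀, q₁, hq₁, h'⟩ := h2
    refine ⟨N + N', _, add_mem (mul_mem hp₀ hq₀) (mul_mem hR (mul_mem hp₁ hq₁)),
      _, add_mem (mul_mem hp₀ hq₁) (mul_mem hp₁ hq₀), fun x u ρ hρ hu => ?_⟩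
    simp only [Pi.add_apply, Pi.mul_apply, map_add, map_mul, heR, ← hu]
    linear_combination (Q' (x.ext (ρ⁻¹ • u)) * (ρ ^ 2) ^ N') * h x u ρ hρ hu +
      (eval u (p₀ x) + ρ * eval u (p₁ x)) * h' x u ρ hρ hu

/-- A polynomial vanishes identically as soon as it vanishes at the vectors `u` such that
`u/ρ` is the image of the basis vector `e` under an orthogonal matrix, for some `ρ` with
`ρ² = u · u ≠ 0`. Over a non-closed field these are found on every line parallel to `e`. -/
lemma eq_zero_of_sphere [CharZero F] (e : ι) (P : MvPolynomial ι F)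
    (h : ∀ (u : ι → F) (ρ : F) (g : Matrix ι ι F), ρ ≠ 0 → ρ ^ 2 = u ⬝ᵥ u → g * gᵀ = 1 →
      g *ᵥ Pi.single e 1 = ρ⁻¹ • u → eval u P = 0) : P = 0 := by
  refine MvPolynomial.funext fun u => ?_
  rw [map_zero]
  -- restrict `P` to the line through `u` in direction `e`
  set r : Polynomial F := aeval (Function.update (fun i => Polynomial.C (u i)) e Polynomial.X) P
    with hr
  have hev : ∀ s : F, r.eval s = eval (Function.update u e s) P := by
    intro s
    rw [hr, ← Polynomial.coe_aeval_eq_eval, ← AlgHom.comp_apply, comp_aeval,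
      ← MvPolynomial.coe_aeval_eq_eval]
    simp only [RingHom.coe_coe]
    congr 2
    funext i
    by_cases hi : i = e
    · subst hi; simp
    · simp [hi]
  suffices hz : r = 0 by
    have := hev (u e)
    rwa [hz, Polynomial.eval_zero, Function.update_eq_self, eq_comm] at this
  -- `k + s²` is the square of `ρ = (k/z + z)/2` for `s = (k/z - z)/2`
  set k : F := Function.update u e 0 ⬝ᵥ Function.update u e 0 with hk
  have hvanish : ∀ z : F, z ≠ 0 → k + z ^ 2 ≠ 0 → r.IsRoot ((k / z - z) / 2) := by
    intro z hz hkz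
    set s : F := (k / z - z) / 2 with hs
    set ρ : F := (k / z + z) / 2 with hρ
    have hρ0 : ρ ≠ 0 := by
      have : ρ = (k + z ^ 2) / (2 * z) := by rw [hρ]; field_simp
      rw [this]
      exact div_ne_zero hkz (mul_ne_zero two_ne_zero hz)
    have hρs : ρ - s = z := by rw [hρ, hs]; ring
    have hρ2 : ρ ^ 2 = k + s ^ 2 := by rw [hρ, hs]; field_simp; ring
    set a : ι → F := Function.update u e s with ha
    have ha' : a = Function.update u e 0 + s • Pi.single e 1 := by
      funext i
      by_cases hi : i = e
      · subst hi; simp [ha]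
      · simp [ha, hi]
    have haa : a ⬝ᵥ a = ρ ^ 2 := by
      rw [hρ2, ha']
      simp [← hk]
      ring
    have hae : a ⬝ᵥ Pi.single e 1 = s := by simp [ha]
    -- the reflection exchanging `e` and `a / ρ`
    set v : ι → F := a - ρ • Pi.single e 1 with hv
    have hvv : v ⬝ᵥ v = 2 * ρ * z := by
      rw [hv, ← hρs]
      simp only [sub_dotProduct, dotProduct_sub, smul_dotProduct, dotProduct_smul, haa, hae,
        dotProduct_comm (Pi.single e 1) a, smul_eq_mul]
      simp
      ring
    have hve : v ⬝ᵥ Pi.single e 1 = -z := by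
      rw [hv, ← hρs]
      simp [ha]
    have hne : ρ * z ≠ 0 := mul_ne_zero hρ0 hz
    rw [Polynomial.IsRoot.def, hev]
    refine h a ρ (1 - (ρ * z)⁻¹ • vecMulVec v v) hρ0 haa.symm ?_ ?_
    · rw [transpose_sub, transpose_smul, transpose_vecMulVec, transpose_one, sub_mul, mul_sub,
        mul_sub, smul_mul_smul_comm, vecMulVec_mul_vecMulVec, hvv]
      simp only [mul_one, one_mul]
      have : (ρ * z)⁻¹ * (ρ * z)⁻¹ * (2 * ρ * z) = 2 * (ρ * z)⁻¹ := by field_simp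
      rw [vecMulVec_smul, smul_smul, this, two_mul, add_smul]
      abel
    · rw [sub_mulVec, smul_mulVec, vecMulVec_mulVec, hve, one_mulVec]
      funext i
      simp [hv]
      field_simp
      ring
  refine Polynomial.eq_zero_of_infinite_isRoot r fun hfin => ?_
  have h1 : {z : F | z ≠ 0 ∧ k + z ^ 2 ≠ 0}.Finite := by
    refine (Set.Finite.preimage' (f := fun z : F => (k / z - z) / 2) hfin fun b _ => ?_).subset
      fun z hz => hvanish z hz.1 hz.2
    have hp : (Polynomial.X ^ 2 + Polynomial.C (2 * b) * Polynomial.X - Polynomial.C k :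
        Polynomial F) ≠ 0 := fun h0 => by
      simpa [Polynomial.coeff_X, Polynomial.coeff_C] using congrArg (Polynomial.coeff · 2) h0
    refine ((Polynomial.finite_setOfPred_isRoot hp).insert 0).subset fun z hz => ?_
    by_cases hz0 : z = 0
    · exact Or.inl hz0
    · right
      have hz' : (k / z - z) / 2 = b := hz
      simp only [Set.mem_ofPred_eq, Polynomial.IsRoot.def, Polynomial.eval_sub,
        Polynomial.eval_add, Polynomial.eval_mul, Polynomial.eval_pow, Polynomial.eval_X,
        Polynomial.eval_C]
      rw [← hz']
      field_simp
      ring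
  have hp : (Polynomial.X ^ 2 + Polynomial.C k : Polynomial F) ≠ 0 := fun h0 => by
    simpa [Polynomial.coeff_C] using congrArg (Polynomial.coeff · 2) h0
  have h2 := (h1.union (Polynomial.finite_setOfPred_isRoot hp)).insert 0
  refine Set.infinite_univ (α := F) (h2.subset fun z _ => ?_)
  by_cases hz0 : z = 0
  · exact Or.inl hz0
  · right
    by_cases hz1 : k + z ^ 2 = 0
    · right
      simpa [add_comm] using hz1
    · exact Or.inl ⟨hz0, hz1⟩

end Average

section Average

variable {F K J T ι : Type*} [Field F] [CharZero F] [Fintype ι] [DecidableEq ι]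

/-- If an invariant function becomes a polynomial in basic invariants after adjoining the fixed
unit vector `e` to the data, then it already is one: `e` may be replaced by any unit vector `u`,
and the dependence on `u` is removed by an iterated Laplacian. -/
lemma mem_gen_of_unit_vector (e : ι) {f : Dat F K J T ι → F}
    (hf : ∀ g : Matrix ι ι F, g * gᵀ = 1 → ∀ x, f (x.conj g) = f x)
    {Q : Dat F K (Option J) T ι → F} (hQ : Q ∈ gen F K (Option J) T ι)
    (hfQ : ∀ x, f x = Q (x.ext (Pi.single e 1))) : f ∈ gen F K J T ι := by
  have hmove : ∀ (g : Matrix ι ι F), g * gᵀ = 1 → ∀ x, f x = Q (x.ext (g *ᵥ Pi.single e 1)) := by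
    intro g hg x
    rw [← hf g hg, hfQ, ← gen_invariant hQ hg (x.ext _)]
    congr 1
    simp only [Dat.conj, Dat.ext, Dat.mk.injEq, true_and, and_true]
    funext j
    cases j
    · simp only [Option.elim, mulVec_mulVec, mul_eq_one_comm.mp hg, one_mulVec]
    · rfl
  obtain ⟨N, p₀, hp₀, p₁, -, h⟩ := gen_homogenize hQ
  have hpoly : ∀ x, MvPolynomial.C (f x) * quad (1 : Matrix ι ι F) ^ N = p₀ x := by
    intro x
    rw [← sub_eq_zero]
    refine eq_zero_of_sphere e _ fun u ρ g hρ hu hg hge => ?_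
    have h1 := h x u ρ hρ hu
    have h2 := h x u (-ρ) (neg_ne_zero.mpr hρ) (by rw [neg_sq, hu])
    rw [← hge, ← hmove g hg] at h1
    rw [inv_neg, neg_smul, ← hge, ← neg_mulVec, ← hmove (-g) (by simpa using hg)] at h2
    simp only [map_sub, map_mul, map_pow, MvPolynomial.eval_C, eval_quad, one_mulVec, ← hu]
    linear_combination (1 / 2) * h1 + (1 / 2) * h2
  have : Nonempty ι := ⟨e⟩
  obtain ⟨c, hc, hlap⟩ := lap_iterate_pow (F := F) (ι := ι) N
  have hmem := fam_eval_zero (fam_lap_iterate hp₀ N)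
  simp only [← hpoly, hlap, MvPolynomial.eval_C] at hmem
  convert Subalgebra.smul_mem _ hmem c⁻¹ using 1
  funext x
  simp
  field_simp

end Average

/-! ### Restriction to the stabiliser of a basis vector -/

section Restrict

variable {F K J T : Type*} [Field F] {n : ℕ}

/-- Data in dimension `n + 1` read as data in dimension `n`: every matrix is cut into a block, a
column, a row and a scalar, and every vector into a vector and a scalar. -/
def res (x : Dat F K J T (Fin (n + 1))) : Dat F K (J ⊕ K ⊕ K) (T ⊕ J ⊕ K) (Fin n) where
  mat k := (x.mat k).submatrix Fin.succ Fin.succ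
  vec
    | .inl j => fun i => x.vec j i.succ
    | .inr (.inl k) => fun i => x.mat k i.succ 0
    | .inr (.inr k) => fun i => x.mat k 0 i.succ
  sc
    | .inl t => x.sc t
    | .inr (.inl j) => x.vec j 0
    | .inr (.inr k) => x.mat k 0 0

/-- The inverse of `res`. -/
def unres (y : Dat F K (J ⊕ K ⊕ K) (T ⊕ J ⊕ K) (Fin n)) : Dat F K J T (Fin (n + 1)) where
  mat k := Matrix.of fun i j =>
    Fin.cases (Fin.cases (y.sc (.inr (.inr k))) (y.vec (.inr (.inr k))) j)
      (fun i' => Fin.cases (y.vec (.inr (.inl k)) i') (fun j' => y.mat k i' j') j) i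
  vec j := Fin.cases (y.sc (.inr (.inl j))) (y.vec (.inl j))
  sc t := y.sc (.inl t)

lemma unres_res (x : Dat F K J T (Fin (n + 1))) : unres (res x) = x := by
  obtain ⟨X, v, s⟩ := x
  simp only [unres, res, Dat.mk.injEq, and_true]
  constructor
  · funext k i j
    refine Fin.cases ?_ (fun i => ?_) i <;> refine Fin.cases ?_ (fun j => ?_) j <;> simp
  · funext j i
    refine Fin.cases ?_ (fun i => ?_) i <;> simp

/-- The block matrix `1 ⊕ g`. -/
def oneSum (g : Matrix (Fin n) (Fin n) F) : Matrix (Fin (n + 1)) (Fin (n + 1)) F :=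
  Matrix.of fun i j => Fin.cases (Fin.cases 1 (fun _ => 0) j)
    (fun i' => Fin.cases 0 (fun j' => g i' j') j) i

lemma oneSum_mul_transpose {g : Matrix (Fin n) (Fin n) F} (hg : g * gᵀ = 1) :
    oneSum g * (oneSum g)ᵀ = 1 := by
  ext i j
  have h := fun i j => congrFun (congrFun hg i) j
  simp only [Matrix.mul_apply, transpose_apply] at h
  refine Fin.cases ?_ (fun i => ?_) i <;> refine Fin.cases ?_ (fun j => ?_) j <;>
    simp [Matrix.mul_apply, Fin.sum_univ_succ, oneSum, h, Matrix.one_apply, eq_comm]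

lemma unres_conj (g : Matrix (Fin n) (Fin n) F)
    (y : Dat F K (J ⊕ K ⊕ K) (T ⊕ J ⊕ K) (Fin n)) :
    unres (y.conj g) = (unres y).conj (oneSum g) := by
  simp only [unres, Dat.conj, Dat.mk.injEq, and_true]
  constructor
  · funext k i j
    refine Fin.cases ?_ (fun i => ?_) i <;> refine Fin.cases ?_ (fun j => ?_) j <;>
    simp [Matrix.mul_apply, Fin.sum_univ_succ, oneSum, mulVec, dotProduct, mul_comm]
  · funext j i
    refine Fin.cases ?_ (fun i => ?_) i <;>
    simp [Fin.sum_univ_succ, oneSum, mulVec, dotProduct]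

lemma pol_unres {f : Dat F K J T (Fin (n + 1)) → F} (hf : f ∈ pol F K J T (Fin (n + 1))) :
    (fun y => f (unres y)) ∈ pol F K (J ⊕ K ⊕ K) (T ⊕ J ⊕ K) (Fin n) := by
  induction hf using Algebra.adjoin_induction with
  | mem f hf =>
    refine Algebra.subset_adjoin ?_
    obtain ⟨k, i, j⟩ | ⟨j, i⟩ | t := hf
    · refine Fin.cases ?_ (fun i => ?_) i <;> refine Fin.cases ?_ (fun j => ?_) j
      · exact IsCoord.sc _
      · exact IsCoord.vec _ _
      · exact IsCoord.vec _ _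
      · exact IsCoord.mat _ _ _
    · refine Fin.cases ?_ (fun i => ?_) i
      · exact IsCoord.sc _
      · exact IsCoord.vec _ _
    · exact IsCoord.sc _
  | algebraMap r => exact algebraMap_mem _ r
  | add f g _ _ h1 h2 => exact add_mem h1 h2
  | mul f g _ _ h1 h2 => exact mul_mem h1 h2

/-- Functions of the data that are polynomials in the basic invariants of the data together with
the basis vector `e₀`. -/
noncomputable def genE (F K J T : Type*) [Field F] (n : ℕ) :
    Subalgebra F (Dat F K J T (Fin (n + 1)) → F) where
  carrier := {f | ∃ Q ∈ gen F K (Option J) T (Fin (n + 1)), ∀ x, f x = Q (x.ext (Pi.single 0 1))}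
  mul_mem' := by
    rintro f g ⟨Q, hQ, h⟩ ⟨Q', hQ', h'⟩
    exact ⟨_, mul_mem hQ hQ', fun x => by simp [h, h']⟩
  add_mem' := by
    rintro f g ⟨Q, hQ, h⟩ ⟨Q', hQ', h'⟩
    exact ⟨_, add_mem hQ hQ', fun x => by simp [h, h']⟩
  algebraMap_mem' r := ⟨_, algebraMap_mem _ r, fun _ => rfl⟩

/-- The vectors of the data, together with `e₀`. -/
abbrev evec (x : Dat F K J T (Fin (n + 1))) (j : Option J) : Fin (n + 1) → F :=
  (x.ext (Pi.single 0 1)).vec j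

lemma genE_tr (w : List (K × Bool)) :
    (fun x => (word x.mat w).trace) ∈ genE F K J T n :=
  ⟨_, gen_tr w, fun _ => rfl⟩

lemma genE_dot (i j : Option J) (w : List (K × Bool)) :
    (fun x => evec x i ⬝ᵥ word x.mat w *ᵥ evec x j) ∈ genE F K J T n :=
  ⟨_, gen_dot i j w, fun _ => rfl⟩

lemma genE_sc (t : T) : (fun x => x.sc t) ∈ genE F K J T n :=
  ⟨_, gen_sc t, fun _ => rfl⟩

/-- Vector-valued functions whose products with all `w v_i` and `w e₀` lie in `genE`. -/
def IsVec (z : Dat F K J T (Fin (n + 1)) → Fin (n + 1) → F) : Prop :=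
  ∀ (i : Option J) (w : List (K × Bool)),
    (fun x => evec x i ⬝ᵥ word x.mat w *ᵥ z x) ∈ genE F K J T n

lemma isVec_evec (j : Option J) :
    IsVec (fun x : Dat F K J T (Fin (n + 1)) => evec x j) := fun i w => genE_dot i j w

lemma IsVec.word {z : Dat F K J T (Fin (n + 1)) → Fin (n + 1) → F} (hz : IsVec z)
    (w : List (K × Bool)) : IsVec fun x => word x.mat w *ᵥ z x := fun i w' => by
  simpa [word_append] using hz i (w' ++ w)

lemma IsVec.apply_zero {z : Dat F K J T (Fin (n + 1)) → Fin (n + 1) → F} (hz : IsVec z) :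
    (fun x => z x 0) ∈ genE F K J T n := by
  simpa [word_nil, evec, Dat.ext] using hz none []

/-- The inclusion `F^n → F^{n+1}` complementary to `e₀`. -/
def inc (F : Type*) [Field F] (n : ℕ) : Matrix (Fin (n + 1)) (Fin n) F :=
  (1 : Matrix (Fin (n + 1)) (Fin (n + 1)) F).submatrix id Fin.succ

lemma incT_mul (A : Matrix (Fin (n + 1)) (Fin (n + 1)) F) :
    (inc F n)ᵀ * A * inc F n = A.submatrix Fin.succ Fin.succ := by
  ext i j
  simp [inc, Matrix.mul_apply, Matrix.one_apply]

lemma incT_mulVec (z : Fin (n + 1) → F) : (inc F n)ᵀ *ᵥ z = fun i => z i.succ := by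
  funext i
  simp [inc, mulVec, dotProduct, Matrix.one_apply]

lemma incT_mul_inc : (inc F n)ᵀ * inc F n = 1 := by
  ext i j
  simp [inc, Matrix.mul_apply, Matrix.one_apply]

lemma inc_mul_incT : inc F n * (inc F n)ᵀ =
    1 - vecMulVec (Pi.single 0 1 : Fin (n + 1) → F) (Pi.single 0 1) := by
  ext i j
  refine Fin.cases ?_ (fun i => ?_) i <;> refine Fin.cases ?_ (fun j => ?_) j <;>
    simp [inc, Matrix.mul_apply, Matrix.one_apply, vecMulVec_apply,
      Fin.succ_ne_zero, eq_comm]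

/-- A word in the cut-down matrices, as a matrix of size `n + 1` padded by zeros. -/
def blow (x : Dat F K J T (Fin (n + 1))) (w : List (K × Bool)) :
    Matrix (Fin (n + 1)) (Fin (n + 1)) F :=
  inc F n * word (res x).mat w * (inc F n)ᵀ

lemma blow_nil (x : Dat F K J T (Fin (n + 1))) :
    blow x [] = 1 - vecMulVec (Pi.single 0 1) (Pi.single 0 1) := by
  rw [blow, word_nil, Matrix.mul_one, inc_mul_incT]

lemma blow_cons (x : Dat F K J T (Fin (n + 1))) (β : K × Bool) (w : List (K × Bool)) :
    blow x (β :: w) =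
      (1 - vecMulVec (Pi.single 0 1) (Pi.single 0 1)) * (letter x.mat β * blow x w) := by
  have : (res x).mat = fun k => (inc F n)ᵀ * x.mat k * inc F n := by
    funext k
    rw [incT_mul]
    rfl
  rw [blow, blow, word_cons, ← inc_mul_incT]
  conv_lhs => rw [this]
  rw [letter_conj, ← this]
  simp only [Matrix.mul_assoc]

lemma IsVec.proj {z : Dat F K J T (Fin (n + 1)) → Fin (n + 1) → F} (hz : IsVec z) :
    IsVec fun x => (1 - vecMulVec (Pi.single 0 1 : Fin (n + 1) → F) (Pi.single 0 1)) *ᵥ z x := by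
  intro i w
  convert sub_mem (hz i w) (mul_mem hz.apply_zero (genE_dot i none w)) using 1
  funext x
  simp [sub_mulVec, mulVec_sub, vecMulVec_mulVec, mulVec_smul, evec, Dat.ext]

lemma IsVec.blow {z : Dat F K J T (Fin (n + 1)) → Fin (n + 1) → F} (hz : IsVec z)
    (w : List (K × Bool)) : IsVec fun x => blow x w *ᵥ z x := by
  induction w with
  | nil => simpa only [blow_nil] using hz.proj
  | cons β w ih =>
    have := (ih.word [β]).proj
    simpa only [blow_cons, word_single, mulVec_mulVec, Matrix.mul_assoc] using this

lemma genE_tr_blow (w w' : List (K × Bool)) :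
    (fun x => (word x.mat w' * blow x w).trace) ∈ genE F K J T n := by
  induction w generalizing w' with
  | nil =>
    have h := sub_mem (genE_tr (F := F) (J := J) (T := T) (n := n) w') (genE_dot none none w')
    convert h using 1
    funext x
    simp [blow_nil, mul_sub, trace_sub, mul_vecMulVec, trace_vecMulVec, evec, Dat.ext]
  | cons β w ih =>
    have h := ((((isVec_evec (F := F) (T := T) (n := n) (none : Option J)).word w').blow w).word
      [β]).apply_zero
    convert sub_mem (ih (w' ++ [β])) h using 1
    funext x
    simp [blow_cons, sub_mul, mul_sub, trace_sub, word_append, word_single, Matrix.mul_assoc]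
    rw [trace_mul_comm, Matrix.mul_assoc, vecMulVec_mul, trace_vecMulVec]
    simp [evec, Dat.ext, Matrix.mul_assoc]

/-- The vectors of `res x` are truncations of vectors `w v_j` or `w e₀`. -/
lemma res_vec (j : J ⊕ K ⊕ K) : ∃ (i : Option J) (w : List (K × Bool)),
    ∀ x : Dat F K J T (Fin (n + 1)), (res x).vec j = (inc F n)ᵀ *ᵥ (word x.mat w *ᵥ evec x i) := by
  simp only [incT_mulVec]
  rcases j with j | k | k
  · exact ⟨some j, [], fun x => by simp [word_nil]; rfl⟩
  · exact ⟨none, [(k, false)], fun x => by simp [word_single, letter, evec, Dat.ext, res]⟩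
  · exact ⟨none, [(k, true)], fun x => by simp [word_single, letter, evec, Dat.ext, res]⟩

lemma genE_of_res {h : Dat F K (J ⊕ K ⊕ K) (T ⊕ J ⊕ K) (Fin n) → F}
    (hh : h ∈ gen F K (J ⊕ K ⊕ K) (T ⊕ J ⊕ K) (Fin n)) :
    (fun x => h (res x)) ∈ genE F K J T n := by
  induction hh using Algebra.adjoin_induction with
  | mem h hh =>
    obtain w | ⟨i, j, w⟩ | t := hh
    · convert genE_tr_blow w [] using 2 with x
      rw [word_nil, Matrix.one_mul, blow, trace_mul_comm, ← Matrix.mul_assoc, incT_mul_inc,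
        Matrix.one_mul]
    · obtain ⟨i', wi, hi⟩ := res_vec (F := F) (T := T) (n := n) i
      obtain ⟨j', wj, hj⟩ := res_vec (F := F) (T := T) (n := n) j
      convert ((isVec_evec (F := F) (T := T) (n := n) j').word wj).blow w i' (wordT wi)
        using 2 with x
      beta_reduce
      rw [hi, hj, word_wordT, OrthInv.blow, dotProduct_mulVec _ (_)ᵀ, vecMul_transpose]
      simp only [← mulVec_mulVec]
      rw [dotProduct_mulVec _ (inc F n), ← mulVec_transpose]
    · rcases t with t | j | k
      · exact genE_sc t
      · exact (isVec_evec (F := F) (K := K) (T := T) (n := n) (some j)).apply_zero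
      · convert ((isVec_evec (F := F) (J := J) (T := T) (n := n) none).word
          [(k, false)]).apply_zero using 2 with x
        simp [word_single, letter, evec, Dat.ext, res]
  | algebraMap r => exact algebraMap_mem _ r
  | add f g _ _ h1 h2 => exact add_mem h1 h2
  | mul f g _ _ h1 h2 => exact mul_mem h1 h2

end Restrict

/-- The first fundamental theorem for `O(n)` acting on matrices, vectors and scalars. -/
theorem mem_gen_of_invariant {F : Type*} [Field F] [CharZero F] {K : Type} (n : ℕ) :
    ∀ (J T : Type) (f : Dat F K J T (Fin n) → F), f ∈ pol F K J T (Fin n) →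
      (∀ g : Matrix (Fin n) (Fin n) F, g * gᵀ = 1 → ∀ x, f (x.conj g) = f x) →
      f ∈ gen F K J T (Fin n) := by
  induction n with
  | zero =>
    intro J T f hf _
    refine Algebra.adjoin_le ?_ hf
    rintro _ (⟨_, i, _⟩ | ⟨_, i⟩ | t)
    · exact i.elim0
    · exact i.elim0
    · exact gen_sc t
  | succ n ih =>
    intro J T f hf hinv
    have h := ih _ _ (fun y => f (unres y)) (pol_unres hf) fun g hg y => by
      rw [unres_conj, hinv _ (oneSum_mul_transpose hg)]
    obtain ⟨Q, hQ, hfQ⟩ := genE_of_res h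
    simp only [unres_res] at hfQ
    exact mem_gen_of_unit_vector 0 hinv hQ hfQ

/-! ### Polynomials as functions -/

section Polynomials

variable {F : Type*} [Field F] {n d : ℕ}

/-- A polynomial in the entries of generic matrices as a function of matrices. -/
noncomputable def toFun (F : Type*) [Field F] (n d : ℕ) :
    MvPolynomial (Fin d × Fin n × Fin n) F →ₐ[F] (Dat F (Fin d) Empty Empty (Fin n) → F) :=
  MvPolynomial.aeval fun v x => x.mat v.1 v.2.1 v.2.2

lemma toFun_apply (f : MvPolynomial (Fin d × Fin n × Fin n) F)
    (x : Dat F (Fin d) Empty Empty (Fin n)) :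
    toFun F n d f x = MvPolynomial.eval (fun v => x.mat v.1 v.2.1 v.2.2) f := by
  induction f using MvPolynomial.induction_on with
  | C a => simp [toFun]
  | add p q hp hq => simp [hp, hq]
  | mul_X p v hp => simp [hp]; simp [toFun]

lemma toFun_injective [CharZero F] : Function.Injective (toFun F n d) := by
  intro f g h
  refine MvPolynomial.funext fun v => ?_
  have := congrFun h ⟨fun k => Matrix.of fun i j => v (k, i, j), Empty.elim, Empty.elim⟩
  simpa [toFun_apply] using this

lemma toFun_mem_pol (f : MvPolynomial (Fin d × Fin n × Fin n) F) :
    toFun F n d f ∈ pol F (Fin d) Empty Empty (Fin n) := by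
  induction f using MvPolynomial.induction_on with
  | C a => simpa [toFun] using algebraMap_mem _ a
  | add p q hp hq => simpa using add_mem hp hq
  | mul_X p v hp =>
    rw [map_mul]
    refine mul_mem hp (Algebra.subset_adjoin ?_)
    simpa [toFun] using IsCoord.mat v.1 v.2.1 v.2.2

lemma toFun_act (g : Matrix (Fin n) (Fin n) F) (f : MvPolynomial (Fin d × Fin n × Fin n) F)
    (x : Dat F (Fin d) Empty Empty (Fin n)) :
    toFun F n d (act F n d g f) x = toFun F n d f (x.conj g) := by
  simp only [toFun_apply]
  induction f using MvPolynomial.induction_on with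
  | C a => simp [act]
  | add p q hp hq => simp [hp, hq]
  | mul_X p v hp =>
    simp only [map_mul, hp]
    simp [act, Dat.conj, Matrix.mul_apply, genMat]

lemma toFun_trace (w : List (Fin d × Bool)) :
    toFun F n d (wordMat F n d w).trace = fun x => (word x.mat w).trace := by
  funext x
  rw [toFun_apply]
  have h : (wordMat F n d w).map (MvPolynomial.eval fun v => x.mat v.1 v.2.1 v.2.2) =
      word x.mat w := by
    induction w with
    | nil => simp [wordMat, word]
    | cons β w ih =>
      have : wordMat F n d (β :: w) = letterMat F n d β * wordMat F n d w := by simp [wordMat]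
      rw [this, Matrix.map_mul, ih, word_cons]
      congr 1
      obtain ⟨k, b⟩ := β
      ext i j
      cases b <;> simp [letterMat, letter, genMat]
  rw [← h]
  simp [trace]

lemma mem_invariants_iff [CharZero F] (f : MvPolynomial (Fin d × Fin n × Fin n) F) :
    f ∈ matrixInvariants F n d ↔ ∀ g : Matrix (Fin n) (Fin n) F, g * gᵀ = 1 →
      ∀ x, toFun F n d f (x.conj g) = toFun F n d f x := by
  refine forall₂_congr fun g _ => ?_
  rw [← toFun_injective.eq_iff, funext_iff]
  simp only [toFun_act]

/-- The basic invariants in the absence of vectors and scalars are the traces of words. The trace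
of the empty word is a constant, so it is not needed as a generator. -/
lemma map_adjoin_trace :
    (Algebra.adjoin F {f : MvPolynomial (Fin d × Fin n × Fin n) F |
      ∃ w : List (Fin d × Bool), w ≠ [] ∧ f = Matrix.trace (wordMat F n d w)}).map (toFun F n d) =
    gen F (Fin d) Empty Empty (Fin n) := by
  rw [AlgHom.map_adjoin]
  refine le_antisymm (Algebra.adjoin_le ?_) (Algebra.adjoin_le ?_)
  · rintro _ ⟨_, ⟨w, _, rfl⟩, rfl⟩
    rw [toFun_trace]
    exact gen_tr w
  · rintro _ (w | ⟨i, _, _⟩ | t)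
    · by_cases hw : w = []
      · subst hw
        simp only [word_nil, trace_one]
        exact algebraMap_mem (Algebra.adjoin F _) ((Fintype.card (Fin n) : F))
      · exact Algebra.subset_adjoin ⟨_, ⟨w, hw, rfl⟩, toFun_trace w⟩
    · exact i.elim
    · exact t.elim

end Polynomials

end OrthInv

theorem orthogonal_invariants_generated_by_traces_of_monomials_charZero
    (F : Type*) [Field F] [CharZero F]
    (n d : ℕ) (hn : 1 ≤ n) (hd : 1 ≤ d) :
    (Algebra.adjoin F
        {f : MvPolynomial (Fin d × Fin n × Fin n) F |
          ∃ w : List (Fin d × Bool), w ≠ [] ∧ f = Matrix.trace (wordMat F n d w)} :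
      Set (MvPolynomial (Fin d × Fin n × Fin n) F)) = matrixInvariants F n d := by
  ext f
  rw [OrthInv.mem_invariants_iff, SetLike.mem_coe]
  constructor
  · intro hf g hg x
    refine OrthInv.gen_invariant ?_ hg x
    rw [← OrthInv.map_adjoin_trace]
    exact ⟨f, hf, rfl⟩
  · intro hf
    have h := OrthInv.mem_gen_of_invariant n Empty Empty _ (OrthInv.toFun_mem_pol f) hf
    rw [← OrthInv.map_adjoin_trace] at h
    obtain ⟨f', hf', he⟩ := h
    rwa [← OrthInv.toFun_injective he]
end

section
/- Let F be an infinite field with char F ≠ 2 and d ≥ 1. Let 𝔐 be the free monoid (without unit) on the 2d letters x₁,…,x_d, x₁ᵀ,…,x_dᵀ, let 𝔑 ⊂ 𝔐 be the subset of primitive words (words not equal to a power of a strictly shorter word), and let 𝔑_σ be the commutative polynomial F-algebra freely generated by symbols σ_t(α), where t ≥ 1 and α ranges over representatives of the ∼-equivalence classes of 𝔑 (∼ identifies a word with all its cyclic permutations and with the reversed word in which each letter is replaced by its transpose). For each n ≥ 1, let Ψ_n : 𝔑_σ → F[V_n]^{O(n)} be the F-algebra homomorphism sending σ_t(α) to σ_t(X_α)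 if t ≤ n and to 0 if t > n, where V_n = (F^{n×n})^d and X_α is the product of generic matrices obtained by substituting X_i for x_i and X_iᵀ for x_iᵀ in α. Then ⋂_{n ≥ 1} ker Ψ_n = 0; that is, there are no nonzero free relations: any element of 𝔑_σ that maps to zero under Ψ_n for every n ≥ 1 is itself zero. -/
open Polynomial Matrix MvPolynomial

/-- A word is primitive if it is not a power `u^m` (`m ≥ 2`) of a strictly shorter word. -/
def PrimitiveWord {d : ℕ} (w : List (Fin d × Bool)) : Prop :=
  ¬ ∃ (u : List (Fin d × Bool)) (m : ℕ), 2 ≤ m ∧ u.length < w.length ∧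
      w = (List.replicate m u).flatten

/-- The transposed word: reverse the word and transpose each letter. -/
def transposeWord {d : ℕ} (w : List (Fin d × Bool)) : List (Fin d × Bool) :=
  (w.map fun β => (β.1, !β.2)).reverse

/-- The set `𝔑` of nonempty primitive words in the letters `x₁, …, x_d, x₁ᵀ, …, x_dᵀ`
(a letter `(k, false)` is `x_k` and `(k, true)` is `x_kᵀ`). -/
def PrimWord (d : ℕ) := {w : List (Fin d × Bool) // w ≠ [] ∧ PrimitiveWord w}

/-- The relation whose equivalence closure is `∼`: a word is related to each of its
cyclic permutations and to its reversed-transposed word. -/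
def wordRel (d : ℕ) (a b : PrimWord d) : Prop :=
  (∃ k, a.1.rotate k = b.1) ∨ b.1 = transposeWord a.1

/-- The set of `∼`-equivalence classes of nonempty primitive words. -/
def WordClass (d : ℕ) := Quot (wordRel d)

/-- `𝔑_σ`: the commutative polynomial `F`-algebra freely generated by the symbols
`σ_t(α)` with `t ≥ 1` and `α` a `∼`-class of primitive words. -/
def NSigma (F : Type*) [CommRing F] (d : ℕ) :=
  MvPolynomial ({t : ℕ // 1 ≤ t} × WordClass d) F

noncomputable instance (F : Type*) [CommRing F] (d : ℕ) : CommRing (NSigma F d) :=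
  inferInstanceAs (CommRing (MvPolynomial _ F))

noncomputable instance (F : Type*) [CommRing F] (d : ℕ) : Algebra F (NSigma F d) :=
  inferInstanceAs (Algebra F (MvPolynomial _ F))

/-- The homomorphism `Ψ_n : 𝔑_σ → F[V_n]` sending `σ_t(α)` to `σ_t(X_α)` if `t ≤ n`
and to `0` if `t > n` (here a representative of the class `α` is chosen by `Quot.out`;
the value does not depend on this choice). -/
noncomputable def Psi (F : Type*) [CommRing F] (n d : ℕ) :
    NSigma F d →ₐ[F] MvPolynomial (Fin d × Fin n × Fin n) F :=
  MvPolynomial.aeval fun v : {t : ℕ // 1 ≤ t} × WordClass d =>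
    sigma (wordMat F n d (Quot.out v.2).1) v.1.1

/-!
Let `K` be an algebraic closure of `F`. Since `F` is infinite, it is enough to show that `p`
vanishes at every point `a` with coordinates in `F`. As only finitely many symbols `σ_t(α)` occur
in `p`, this follows once matrices over `K` are found whose invariants `σ_t(X_α)` take the
prescribed values `a (t, α)` for all these symbols (`exists_matrices`). Throughout, the invariants
of `M` are packaged in the polynomial `revDet M = det (1 + λ M) = ∑ σ_t(M) λ^t`.

*From `O(2m)` to `GL(m)`.* Over `K`, where `-1` is a square and `2` is invertible, the standard
symmetric form on a space of dimension `2m` is hyperbolic. In a hyperbolic basis, transposition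
becomes `diag(A, Bᵀ) ↦ diag(B, Aᵀ)`. So for arbitrary `m × m` matrices `Y_b`, one for each of the
`2d` letters `b`, there are `X_1, …, X_d` such that every `X_w` is conjugate to
`diag(Y_w, (Y_{wᵀ})ᵀ)` (`prod_hypConj`), and `revDet X_w = revDet Y_w * revDet Y_{wᵀ}`.

*Cycle matrices.* For a primitive word `u`, take the directed cycle with `|u|` vertices and edges
labelled by the letters of `u`, and let `Y_b` be `y` times the adjacency matrix of the edges
labelled `b`. If `w` is primitive, then `Y_w` is nilpotent unless `w` is a rotation of `u`, because
two primitive words with a common infinite periodic continuation coincide. If `w` is a rotation of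
`u`, then `Y_w` has a single nonzero entry `y^|u|`, on the diagonal. For a disjoint union of such
cycles, `revDet Y_w` is thus the product of `1 + λ y^|u|` over the cycles on which `w` can be read
(`revDet_prod_cycMat`).

*Choice of the weights.* Take several cycles on the chosen representative `u` of each class. Let
`P_u` be the product of the corresponding factors `1 + λ z`; it can be any polynomial with constant
term `1`. Then `revDet X_u` is `P_u ^ 2` if `uᵀ` is a rotation of `u`, and `P_u` otherwise. Either
expression attains every prescribed initial segment of coefficients, as a power series with
constant term `1` has a square root when `2` is invertible.
-/

/-! ### The reversed characteristic polynomial -/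

/-- The polynomial `det (1 + λ M) = ∑ σ_t(M) λ^t` in the indeterminate `λ = Polynomial.X`. -/
noncomputable def revDet {V R : Type*} [Fintype V] [DecidableEq V] [CommRing R]
    (M : Matrix V V R) : R[X] :=
  det (1 + (Polynomial.X : R[X]) • M.map Polynomial.C)

section revDet
variable {V W R : Type*} [Fintype V] [DecidableEq V] [Fintype W] [DecidableEq W] [CommRing R]

lemma revDet_eq_charpolyRev (M : Matrix V V R) : revDet M = (-M).charpolyRev := by
  unfold revDet Matrix.charpolyRev
  congr 1
  ext i j
  simp

lemma sigma_eq_coeff_revDet [Nontrivial R] {n : ℕ} (M : Matrix (Fin n) (Fin n) R) (t : ℕ) :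
    sigma M t = (revDet M).coeff t := by
  have h1 : (M.map Polynomial.C + (Polynomial.X : R[X]) • 1).det = (-M).charpoly := by
    unfold Matrix.charpoly Matrix.charmatrix
    congr 1
    ext i j
    by_cases h : i = j
    · subst h; simp [add_comm]
    · simp [h]
  have hd : (-M).charpoly.natDegree = n := by
    simp [Matrix.charpoly_natDegree_eq_dim]
  rw [sigma, h1, revDet_eq_charpolyRev, ← Matrix.reverse_charpoly, Polynomial.coeff_reverse, hd]
  split_ifs with h
  · rw [Polynomial.revAt_le h]
  · rw [Polynomial.revAt_eq_self_of_lt (by omega),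
      Polynomial.coeff_eq_zero_of_natDegree_lt (by omega)]

lemma revDet_reindex (e : V ≃ W) (M : Matrix V V R) : revDet (M.submatrix e.symm e.symm) = revDet M := by
  unfold revDet
  rw [← Matrix.det_submatrix_equiv_self e.symm]
  congr 1
  ext i j
  simp [Matrix.one_apply]

lemma revDet_fromBlocks (A : Matrix V V R) (B : Matrix W W R) :
    revDet (fromBlocks A 0 0 B) = revDet A * revDet B := by
  unfold revDet
  rw [← Matrix.det_fromBlocks_zero₁₂ _ 0]
  congr 1
  ext (i | i) (j | j) <;> simp [Matrix.one_apply]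

lemma revDet_transpose (A : Matrix V V R) : revDet Aᵀ = revDet A := by
  unfold revDet
  rw [← Matrix.det_transpose]
  simp [Matrix.transpose_map]

lemma revDet_mul_comm (A B : Matrix V V R) : revDet (A * B) = revDet (B * A) := by
  unfold revDet
  rw [Matrix.map_mul, Matrix.map_mul, ← Matrix.smul_mul, Matrix.det_one_add_mul_comm,
    Matrix.mul_smul]

lemma revDet_of_isNilpotent [IsDomain R] {M : Matrix V V R} (h : IsNilpotent M) :
    revDet M = 1 := by
  rw [revDet_eq_charpolyRev]
  have hu := Matrix.isUnit_charpolyRev_of_isNilpotent h.neg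
  obtain ⟨r, -, hr⟩ := Polynomial.isUnit_iff.1 hu
  have h0 : ((-M).charpolyRev).coeff 0 = 1 := by
    rw [Polynomial.coeff_zero_eq_eval_zero, Matrix.eval_charpolyRev]
  rw [← hr] at h0 ⊢
  simp at h0
  simp [h0]

lemma revDet_add {M N : Matrix V V R} (h : M * N = 0) :
    revDet (M + N) = revDet M * revDet N := by
  unfold revDet
  rw [← Matrix.det_mul]
  congr 1
  have : M.map Polynomial.C * N.map Polynomial.C = (0 : Matrix V V R[X]) := by
    rw [← Matrix.map_mul, h]; ext; simp
  rw [add_mul, one_mul, mul_add, mul_one, Matrix.smul_mul, Matrix.mul_smul, this]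
  rw [Matrix.map_add _ (by simp)]
  simp only [smul_add, smul_zero, add_zero]
  abel

lemma revDet_diagonal (c : V → R) :
    revDet (diagonal c) = ∏ v, (1 + Polynomial.X * Polynomial.C (c v)) := by
  unfold revDet
  rw [← Matrix.det_diagonal]
  congr 1
  ext i j : 2
  by_cases h : i = j
  · subst h; simp
  · simp [h]
end revDet

/-! ### Weighted partial maps -/

/-- The matrix of the map `τ` with weights `c`: row `v` has the entry `c v` in column `τ v` and
zeros elsewhere. A vertex with `c v = 0` is one where the partial map is undefined. -/
def pfMat {V R : Type*} [DecidableEq V] [Zero R] (τ : V → V) (c : V → R) : Matrix V V R :=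
  Matrix.of fun v v' => if v' = τ v then c v else 0

section pf
variable {V R : Type*} [Fintype V] [DecidableEq V] [CommRing R]

lemma pfMat_mul (τ τ' : V → V) (c c' : V → R) :
    pfMat τ c * pfMat τ' c' = pfMat (τ' ∘ τ) (fun v => c v * c' (τ v)) := by
  ext v v'
  simp only [pfMat, Matrix.mul_apply, Matrix.of_apply]
  rw [Finset.sum_eq_single (τ v)] <;> simp +contextual

omit [Fintype V] in
lemma pfMat_one : pfMat id (fun _ => (1 : R)) = (1 : Matrix V V R) := by
  ext v v'
  simp [pfMat, Matrix.one_apply, eq_comm]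

lemma pfMat_pow (τ : V → V) (c : V → R) (s : ℕ) :
    pfMat τ c ^ s = pfMat (τ^[s]) (fun v => ∏ r ∈ Finset.range s, c (τ^[r] v)) := by
  induction s with
  | zero => simpa using pfMat_one.symm
  | succ s ih =>
    rw [pow_succ, ih, pfMat_mul]
    congr 1
    · rw [Function.iterate_succ']
    · ext v; rw [Finset.prod_range_succ]

/-- If every infinite orbit on which the weights do not vanish consists of a fixed point, then the
matrix is the sum of a nilpotent part and of the diagonal part carried by the fixed points. -/
lemma revDet_pfMat [IsDomain R] (τ : V → V) (hτ : Function.Injective τ) (c : V → R)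
    (h : ∀ v, (∀ r, c (τ^[r] v) ≠ 0) → τ v = v) :
    revDet (pfMat τ c) =
      ∏ v, (1 + Polynomial.X * Polynomial.C (if τ v = v then c v else 0)) := by
  have hsum : pfMat τ c = pfMat τ (fun v => if τ v = v then 0 else c v) +
      diagonal (fun v => if τ v = v then c v else 0) := by
    ext v v'
    by_cases h1 : τ v = v
    · by_cases h2 : v' = v
      · subst h2; simp [pfMat, h1]
      · simp [pfMat, h1, h2, diagonal_apply_ne' _ h2]
    · by_cases h2 : v' = v
      · subst h2; simp [pfMat, h1]
      · simp [pfMat, h1, diagonal_apply_ne' _ h2]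
  rw [hsum, revDet_add, revDet_diagonal, revDet_of_isNilpotent, one_mul]
  -- Off the fixed points, each orbit meets a zero weight, so a uniform power vanishes.
  · have hr : ∀ v, ∃ r, (if τ (τ^[r] v) = τ^[r] v then 0 else c (τ^[r] v)) = 0 := by
      intro v
      by_contra! hc
      have h0 := hc 0
      have : τ v = v := h v fun r hr0 => hc r (by simp [hr0])
      simp [this] at h0
    choose r hr using hr
    refine ⟨(Finset.univ.sup r) + 1, ?_⟩
    rw [pfMat_pow]
    ext v v'
    have : ∏ s ∈ Finset.range (Finset.univ.sup r + 1),
        (if τ (τ^[s] v) = τ^[s] v then 0 else c (τ^[s] v)) = 0 :=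
      Finset.prod_eq_zero
        (Finset.mem_range.2 (Nat.lt_succ_of_le (Finset.le_sup (Finset.mem_univ v)))) (hr v)
    simp [pfMat, this]
  · ext v v'
    rw [Matrix.mul_diagonal]
    by_cases h1 : v' = τ v
    · by_cases h2 : τ v' = v'
      · have : τ v = v := by subst h1; exact hτ h2
        simp [pfMat, this]
      · simp [h2]
    · simp [pfMat, h1]
end pf

/-! ### Primitive words -/

section words
variable {d : ℕ}

lemma getElem_flatten_replicate {α : Type*} (u : List α) (m : ℕ) (i : ℕ)
    (h : i < ((List.replicate m u).flatten).length) (hlt : i % u.length < u.length) :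
    ((List.replicate m u).flatten)[i] = u[i % u.length] := by
  induction m generalizing i with
  | zero => simp at h
  | succ m ih =>
    simp only [List.replicate_succ, List.flatten_cons] at h ⊢
    rw [List.getElem_append]
    split_ifs with hi
    · simp [Nat.mod_eq_of_lt hi]
    · rw [ih]
      · simp only [← Nat.mod_eq_sub_mod (not_lt.1 hi)]
      · rw [← Nat.mod_eq_sub_mod (not_lt.1 hi)]; exact hlt

/-- The periodic extension of a nonempty word. -/
def perWord {α : Type*} (w : List α) (hw : w ≠ []) (m : ℕ) : α :=
  w[m % w.length]'(Nat.mod_lt _ (List.length_pos_iff.2 hw))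

lemma perWord_periodic {α : Type*} (w : List α) (hw : w ≠ []) :
    Function.Periodic (perWord w hw) w.length := by
  intro m; simp [perWord]

/-- Bézout's identity is used modulo `p`, where it holds within the natural numbers. -/
lemma periodic_gcd {α : Type*} {f : ℕ → α} {p q : ℕ} (hp : Function.Periodic f p) (hp0 : 0 < p)
    (hq : Function.Periodic f q) : Function.Periodic f (Nat.gcd q p) := by
  rcases (Nat.le_of_dvd hp0 (Nat.gcd_dvd_right q p)).lt_or_eq with h | h
  · obtain ⟨x, -, hx⟩ := Nat.exists_mul_mod_eq_gcd h
    intro m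
    have h1 : f (m + q * x) = f m := by
      have := hq.nat_mul x m
      rwa [Nat.cast_id, mul_comm] at this
    have h2 := hp.nat_mul (q * x / p) (m + Nat.gcd q p)
    rw [Nat.cast_id] at h2
    rw [← h2, ← h1]
    congr 1
    have := Nat.mod_add_div (q * x) p
    rw [hx, mul_comm p] at this
    omega
  · rwa [h]

/-- The minimal period of the periodic extension of a primitive word is its length: otherwise
the gcd of `g` and the length is a proper period, and `w` is a power of its prefix of that length. -/
lemma PrimitiveWord.dvd_of_periodic {w : List (Fin d × Bool)} (hw : w ≠ [])
    (hpr : PrimitiveWord w) {g : ℕ} (hg : Function.Periodic (perWord w hw) g) :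
    w.length ∣ g := by
  have hl : 0 < w.length := List.length_pos_iff.2 hw
  have hper := periodic_gcd (perWord_periodic w hw) hl hg
  set h := Nat.gcd g w.length with hh
  have hdvd : h ∣ w.length := Nat.gcd_dvd_right _ _
  have hpos : 0 < h := Nat.gcd_pos_of_pos_right _ hl
  by_contra hne
  have hlt : h < w.length := lt_of_le_of_ne (Nat.le_of_dvd hl hdvd) fun he =>
    hne (he ▸ Nat.gcd_dvd_left g w.length)
  obtain ⟨m, hm⟩ := hdvd
  have htl : (w.take h).length = h := by simp [hlt.le]
  refine hpr ⟨w.take h, m, ?_, by omega, ?_⟩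
  · by_contra! hm2
    interval_cases m <;> omega
  · refine List.ext_getElem ?_ fun i h1 h2 => ?_
    · rw [List.length_flatten]; simp [hlt.le]; rw [mul_comm]; exact hm
    · rw [getElem_flatten_replicate _ _ _ _ (Nat.mod_lt _ (by omega))]
      simp only [htl, List.getElem_take]
      have h3 := hper.map_mod_nat i
      have h4 : i % h < w.length := (Nat.mod_lt _ hpos).trans hlt
      simpa [perWord, Nat.mod_eq_of_lt h1, Nat.mod_eq_of_lt h4] using h3.symm

lemma perWord_rotate {α : Type*} (u : List α) (hu : u ≠ []) (i m : ℕ) (h : u.rotate i ≠ []) :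
    perWord (u.rotate i) h m = perWord u hu (i + m) := by
  simp [perWord, List.getElem_rotate, add_comm]

/-- If the periodic extension of `u`, read from position `i`, agrees with that of `w`, then each
of the two lengths is a period of the other word, so the lengths are equal. -/
lemma rotate_eq_of_perWord_eq {u w : List (Fin d × Bool)} (hu : u ≠ []) (hw : w ≠ [])
    (pu : PrimitiveWord u) (pw : PrimitiveWord w) (i : ℕ)
    (h : ∀ m, perWord u hu (i + m) = perWord w hw m) : u.rotate i = w := by
  have h1 : w.length ∣ u.length := pw.dvd_of_periodic hw fun m => by
    rw [← h, ← h, ← add_assoc, perWord_periodic u hu]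
  have h2 : u.length ∣ w.length := pu.dvd_of_periodic hu fun m => by
    -- Any position `m` is congruent modulo the length of `u` to one of the form `i + m'`.
    have hs : ∀ m, perWord u hu (i + (m + i * (u.length - 1))) = perWord u hu m := fun m => by
      have := (perWord_periodic u hu).nat_mul i m
      rw [Nat.cast_id] at this
      rw [← this]
      congr 1
      obtain ⟨k, hk⟩ := Nat.exists_eq_succ_of_ne_zero (List.length_pos_iff.2 hu).ne'
      rw [hk]; simp; ring
    rw [← hs, ← hs m, add_right_comm, h, perWord_periodic w hw, ← h]
  have hl : u.length = w.length := Nat.dvd_antisymm h2 h1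
  refine List.ext_getElem (by simpa using hl) fun k hk1 hk2 => ?_
  have := h k
  simp only [perWord, Nat.mod_eq_of_lt hk2] at this
  rw [List.getElem_rotate, ← this]
  simp [add_comm]

/-- The rotations of a primitive word are pairwise distinct. -/
lemma rotate_injOn {u : List (Fin d × Bool)} (hu : u ≠ []) (pu : PrimitiveWord u) {i j : ℕ}
    (hi : i < u.length) (hj : j < u.length) (h : u.rotate i = u.rotate j) : i = j := by
  wlog hij : i ≤ j generalizing i j
  · exact (this hj hi h.symm (by omega)).symm
  have key : Function.Periodic (perWord u hu) (j - i) := fun m => by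
    have hri : u.rotate i ≠ [] := by simpa using hu
    have hrj : u.rotate j ≠ [] := by simpa using hu
    have e : ∀ m, perWord u hu (i + m) = perWord u hu (j + m) := fun m => by
      rw [← perWord_rotate u hu i m hri, ← perWord_rotate u hu j m hrj]; simp only [h]
    have := e (m + u.length - i)
    rw [show i + (m + u.length - i) = m + u.length by omega,
      show j + (m + u.length - i) = (m + (j - i)) + u.length by omega,
      perWord_periodic u hu, perWord_periodic u hu] at this
    exact this.symm
  have := Nat.eq_zero_of_dvd_of_lt (pu.dvd_of_periodic hu key) (by omega)
  omega

lemma transposeWord_transposeWord (w : List (Fin d × Bool)) :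
    transposeWord (transposeWord w) = w := by
  simp [transposeWord, List.map_reverse, Function.comp_def]

lemma transposeWord_flatten_replicate (u : List (Fin d × Bool)) (m : ℕ) :
    transposeWord (List.replicate m u).flatten
      = (List.replicate m (transposeWord u)).flatten := by
  simp [transposeWord, List.map_flatten, List.reverse_flatten]

lemma length_transposeWord (w : List (Fin d × Bool)) : (transposeWord w).length = w.length := by
  simp [transposeWord]

lemma PrimitiveWord.transposeWord {w : List (Fin d × Bool)} (h : PrimitiveWord w) :
    PrimitiveWord (transposeWord w) := by
  rintro ⟨u, m, hm, hu, he⟩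
  refine h ⟨_root_.transposeWord u, m, hm, ?_, ?_⟩
  · simpa [length_transposeWord] using hu
  · rw [← transposeWord_flatten_replicate, ← he, transposeWord_transposeWord]

lemma primitiveWord_singleton (b : Fin d × Bool) : PrimitiveWord [b] := by
  rintro ⟨u, m, -, hu, he⟩
  have : u = [] := by simpa using hu
  subst this
  simp at he
end words

/-! ### Cycle matrices -/

section cycles
variable {d : ℕ} {K O : Type*} [Field K] (u : O → PrimWord d)

/-- The vertices of a disjoint union of cycles, the cycle of index `o` having the length of the
word `u o`. -/
abbrev CycV : Type _ := Σ o : O, Fin (u o).1.length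

lemma PrimWord.length_pos (a : PrimWord d) : 0 < a.1.length := List.length_pos_iff.2 a.2.1

/-- The vertex reached from `v` after `m` steps along its cycle. -/
def cycStep (m : ℕ) (v : CycV u) : CycV u :=
  ⟨v.1, ⟨(v.2.1 + m) % (u v.1).1.length, Nat.mod_lt _ (u v.1).length_pos⟩⟩

lemma cycStep_zero : cycStep u 0 = id := by
  funext ⟨o, i⟩
  simp [cycStep, Nat.mod_eq_of_lt i.2]

lemma cycStep_comp (a b : ℕ) : cycStep u a ∘ cycStep u b = cycStep u (b + a) := by
  funext ⟨o, i⟩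
  simp [cycStep, add_assoc]

lemma cycStep_iterate (a s : ℕ) : (cycStep u a)^[s] = cycStep u (s * a) := by
  induction s with
  | zero => simp [cycStep_zero]
  | succ s ih => rw [Function.iterate_succ', ih, cycStep_comp]; congr 1; ring

lemma cycStep_injective (a : ℕ) : Function.Injective (cycStep u a) := by
  rintro ⟨o, i⟩ ⟨o', i'⟩ h
  simp only [cycStep, Sigma.mk.injEq] at h
  obtain ⟨rfl, h⟩ := h
  simp only [heq_eq_eq, Fin.mk.injEq] at h
  have := Nat.ModEq.add_right_cancel' a h
  rw [Nat.ModEq, Nat.mod_eq_of_lt i.2, Nat.mod_eq_of_lt i'.2] at this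
  rw [Fin.ext this]

/-- The label of the edge leaving `v`, a letter of the word of the cycle of `v`. -/
def cycLabel (v : CycV u) : Fin d × Bool := perWord (u v.1).1 (u v.1).2.1 v.2.1

lemma cycLabel_step (m : ℕ) (v : CycV u) :
    cycLabel u (cycStep u m v) = perWord (u v.1).1 (u v.1).2.1 (v.2.1 + m) := by
  simp [cycLabel, cycStep, perWord]

open Classical in
/-- The weight of the walk reading `w` from `v`: each edge of the cycle `o` has weight `y o`, and
the weight is zero if `w` cannot be read from `v`. -/
noncomputable def cycCoef (y : O → K) (w : List (Fin d × Bool)) (v : CycV u) : K :=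
  if ∀ (m : ℕ) (h : m < w.length), cycLabel u (cycStep u m v) = w[m] then y v.1 ^ w.length else 0

variable [DecidableEq O]

/-- The weighted adjacency matrix of the edges labelled `b`. -/
noncomputable def cycMat (y : O → K) (b : Fin d × Bool) : Matrix (CycV u) (CycV u) K :=
  pfMat (cycStep u 1) (cycCoef u y [b])

/-- In the product of letter matrices along `w`, the rows are indexed by the starting points of the
walks reading `w`. -/
lemma prod_cycMat [Fintype O] (y : O → K) (w : List (Fin d × Bool)) :
    (w.map (cycMat u y)).prod = pfMat (cycStep u w.length) (cycCoef u y w) := by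
  induction w with
  | nil =>
    rw [List.map_nil, List.prod_nil, ← pfMat_one]
    congr 1
    · simp [cycStep_zero]
    · funext v; simp [cycCoef]
  | cons b w ih =>
    rw [List.map_cons, List.prod_cons, ih, cycMat, pfMat_mul, cycStep_comp]
    congr 1
    · simp [add_comm]
    · funext v
      have hs : ∀ m, cycStep u m (cycStep u 1 v) = cycStep u (m + 1) v := fun m => by
        rw [add_comm]; exact congrFun (cycStep_comp u m 1) v
      have h1 : (∀ (m : ℕ) (h : m < (b :: w).length), cycLabel u (cycStep u m v) = (b :: w)[m]) ↔
          cycLabel u (cycStep u 0 v) = b ∧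
          ∀ (m : ℕ) (h : m < w.length), cycLabel u (cycStep u m (cycStep u 1 v)) = w[m] := by
        constructor
        · intro h
          refine ⟨h 0 (by simp), fun m hm => ?_⟩
          rw [hs]
          exact h (m + 1) (Nat.succ_lt_succ hm)
        · rintro ⟨h0, h⟩ m hm
          cases m with
          | zero => simpa using h0
          | succ m => rw [← hs]; simpa using h m (by simpa using hm)
      have h2 : (∀ (m : ℕ) (h : m < [b].length), cycLabel u (cycStep u m v) = [b][m]) ↔
          cycLabel u (cycStep u 0 v) = b := by
        simp
      have h3 : (cycStep u 1 v).1 = v.1 := rfl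
      simp only [cycCoef, h1, h2, h3]
      split_ifs <;> simp_all [pow_succ, mul_comm]

omit [DecidableEq O] in
lemma cycCoef_ne_zero {y : O → K} {w : List (Fin d × Bool)} {v : CycV u}
    (h : cycCoef u y w v ≠ 0) (m : ℕ) (hm : m < w.length) :
    perWord (u v.1).1 (u v.1).2.1 (v.2.1 + m) = w[m] := by
  unfold cycCoef at h
  split_ifs at h with h'
  · rw [← cycLabel_step]; exact h' m hm
  · exact absurd rfl h

omit [DecidableEq O] in
/-- If all powers of `w` can be read from `v`, then `w` is the word of the cycle read from `v`. -/
lemma rotate_eq_of_cycCoef_ne_zero {y : O → K} (w : PrimWord d) {v : CycV u}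
    (h : ∀ r, cycCoef u y w.1 ((cycStep u w.1.length)^[r] v) ≠ 0) :
    (u v.1).1.rotate v.2 = w.1 := by
  refine rotate_eq_of_perWord_eq (u v.1).2.1 w.2.1 (u v.1).2.2 w.2.2 _ fun m => ?_
  have h1 := h (m / w.1.length)
  rw [cycStep_iterate] at h1
  have h2 := cycCoef_ne_zero u h1 (m % w.1.length) (Nat.mod_lt _ w.length_pos)
  simp only [perWord, cycStep, Nat.mod_add_mod] at h2 ⊢
  rw [← h2]
  congr 2
  have := Nat.div_add_mod' m w.1.length
  omega

omit [DecidableEq O] in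
lemma cycStep_length {w : List (Fin d × Bool)} {v : CycV u} (h : (u v.1).1.rotate v.2 = w) :
    cycStep u w.length v = v := by
  obtain ⟨o, i⟩ := v
  simp [← h, cycStep, Nat.mod_eq_of_lt i.2]

omit [DecidableEq O] in
lemma cycCoef_of_rotate (y : O → K) {w : List (Fin d × Bool)} {v : CycV u}
    (h : (u v.1).1.rotate v.2 = w) : cycCoef u y w v = y v.1 ^ w.length := by
  rw [cycCoef, if_pos]
  intro m hm
  rw [cycLabel_step]
  subst h
  simp [perWord, List.getElem_rotate, add_comm]

open Classical in
lemma revDet_prod_cycMat [Fintype O] (y : O → K) (w : PrimWord d) :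
    revDet ((w.1.map (cycMat u y)).prod) =
      ∏ o, if ∃ i, (u o).1.rotate i = w.1 then
        1 + Polynomial.X * Polynomial.C (y o ^ w.1.length) else 1 := by
  rw [prod_cycMat, revDet_pfMat _ (cycStep_injective u _), Fintype.prod_sigma]
  · refine Finset.prod_congr rfl fun o _ => ?_
    have key : ∀ i : Fin (u o).1.length, (u o).1.rotate i ≠ w.1 →
        (if cycStep u w.1.length ⟨o, i⟩ = ⟨o, i⟩ then cycCoef u y w.1 ⟨o, i⟩ else 0) = 0 := by
      intro i hi
      rw [ite_eq_right_iff]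
      intro hfix
      by_contra h0
      exact hi (rotate_eq_of_cycCoef_ne_zero u (y := y) w (v := ⟨o, i⟩) fun r => by
        rwa [Function.iterate_fixed hfix])
    split_ifs with h
    · obtain ⟨i, hi⟩ := h
      have hlt : i % (u o).1.length < (u o).1.length := Nat.mod_lt _ (u o).length_pos
      have hi' : (u o).1.rotate (i % (u o).1.length) = w.1 := by rw [List.rotate_mod, hi]
      rw [Finset.prod_eq_single ⟨i % (u o).1.length, hlt⟩]
      · rw [if_pos (cycStep_length u (v := ⟨o, ⟨_, hlt⟩⟩) hi'),
          cycCoef_of_rotate u y (v := ⟨o, ⟨_, hlt⟩⟩) hi']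
      · intro j _ hj
        rw [key j]
        · simp
        · intro hj'
          exact hj (Fin.ext (rotate_injOn (u o).2.1 (u o).2.2 j.2 hlt (hj'.trans hi'.symm)))
      · simp
    · refine Finset.prod_eq_one fun i _ => ?_
      rw [key i fun hi => h ⟨_, hi⟩]
      simp
  · intro v hv
    exact cycStep_length u (rotate_eq_of_cycCoef_ne_zero u w hv)
end cycles

/-! ### Hyperbolic conjugation -/

section hyperbolic
variable {K V : Type*} [Field K] [Fintype V] [DecidableEq V]

/-- The Gram matrix of the hyperbolic form. -/
def hypJ (K V : Type*) [Field K] [DecidableEq V] : Matrix (V ⊕ V) (V ⊕ V) K := fromBlocks 0 1 1 0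

/-- A matrix with `P Pᵀ = J` when `ι ^ 2 = -1`; it relates the hyperbolic form to the standard
symmetric form. -/
noncomputable def hypP (V : Type*) [DecidableEq V] (ι : K) : Matrix (V ⊕ V) (V ⊕ V) K :=
  fromBlocks 1 (ι • 1) ((1 / 2 : K) • 1) ((-(ι / 2)) • 1)

lemma hypP_mul_transpose (h2 : (2 : K) ≠ 0) {ι : K} (hι : ι ^ 2 = -1) :
    hypP V ι * (hypP V ι)ᵀ = hypJ K V := by
  rw [hypP, hypJ, fromBlocks_transpose, fromBlocks_multiply]
  simp only [transpose_smul, transpose_one, Matrix.smul_mul, Matrix.mul_smul, one_mul,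
    smul_smul, ← add_smul]
  have e1 : ∀ x : K, x = 0 → x • (1 : Matrix V V K) = 0 := by rintro _ rfl; simp
  have e2 : ∀ x : K, x = 1 → x • (1 : Matrix V V K) = 1 := by rintro _ rfl; simp
  congr 1
  · rw [← one_smul K (1 : Matrix V V K), smul_smul, ← add_smul]
    apply e1
    linear_combination hι
  · apply e2
    field_simp
    linear_combination -hι
  · apply e2
    field_simp
    linear_combination -hι
  · apply e1
    field_simp
    linear_combination hι

lemma hypJ_mul_self : hypJ K V * hypJ K V = 1 := by
  simp [hypJ, fromBlocks_multiply]

/-- The matrix `P⁻¹ diag(A, Bᵀ) P`, where `P⁻¹ = Pᵀ J`. Transposing it exchanges `A` and `B`. -/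
noncomputable def hypConj (ι : K) (A B : Matrix V V K) : Matrix (V ⊕ V) (V ⊕ V) K :=
  (hypP V ι)ᵀ * hypJ K V * fromBlocks A 0 0 Bᵀ * hypP V ι

lemma hypConj_transpose (ι : K) (A B : Matrix V V K) :
    (hypConj ι A B)ᵀ = hypConj ι B A := by
  have h : hypJ K V * fromBlocks B 0 0 Aᵀ = fromBlocks Aᵀ 0 0 B * hypJ K V := by
    simp [hypJ, fromBlocks_multiply]
  have hJ : (hypJ K V)ᵀ = hypJ K V := by simp [hypJ, fromBlocks_transpose]
  rw [hypConj, hypConj, Matrix.mul_assoc _ (hypJ K V) (fromBlocks B _ _ _), h]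
  simp [hJ, fromBlocks_transpose, Matrix.mul_assoc]

lemma hypConj_mul (h2 : (2 : K) ≠ 0) {ι : K} (hι : ι ^ 2 = -1) (A B A' B' : Matrix V V K) :
    hypConj ι A B * hypConj ι A' B' = hypConj ι (A * A') (B' * B) := by
  have h : hypP V ι * ((hypP V ι)ᵀ * hypJ K V) = 1 := by
    rw [← Matrix.mul_assoc, hypP_mul_transpose h2 hι, hypJ_mul_self]
  have h' : ∀ M, hypP V ι * ((hypP V ι)ᵀ * (hypJ K V * M)) = M := fun M => by
    rw [← Matrix.mul_assoc (hypP V ι)ᵀ, ← Matrix.mul_assoc, h, Matrix.one_mul]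
  simp only [hypConj, Matrix.mul_assoc, h']
  rw [← Matrix.mul_assoc (fromBlocks A _ _ _), fromBlocks_multiply]
  simp

lemma hypConj_one (h2 : (2 : K) ≠ 0) {ι : K} (hι : ι ^ 2 = -1) :
    hypConj ι (1 : Matrix V V K) 1 = 1 := by
  have h : hypP V ι * ((hypP V ι)ᵀ * hypJ K V) = 1 := by
    rw [← Matrix.mul_assoc, hypP_mul_transpose h2 hι, hypJ_mul_self]
  rw [hypConj, transpose_one, fromBlocks_one, Matrix.mul_one]
  exact mul_eq_one_comm.1 h

lemma revDet_hypConj (h2 : (2 : K) ≠ 0) {ι : K} (hι : ι ^ 2 = -1) (A B : Matrix V V K) :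
    revDet (hypConj ι A B) = revDet A * revDet B := by
  rw [hypConj, revDet_mul_comm, ← Matrix.mul_assoc, ← Matrix.mul_assoc,
    hypP_mul_transpose h2 hι, hypJ_mul_self, Matrix.one_mul, revDet_fromBlocks, revDet_transpose]

/-- The assignment `b ↦ P⁻¹ diag(Y_b, (Y_{bᵀ})ᵀ) P` extends to words in the same form. -/
lemma prod_hypConj (h2 : (2 : K) ≠ 0) {ι : K} (hι : ι ^ 2 = -1) {d : ℕ}
    (Y : Fin d × Bool → Matrix V V K) (w : List (Fin d × Bool)) :
    (w.map fun b => hypConj ι (Y b) (Y (b.1, !b.2))).prod =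
      hypConj ι (w.map Y).prod ((transposeWord w).map Y).prod := by
  induction w with
  | nil => simp [transposeWord, hypConj_one h2 hι]
  | cons b w ih =>
    rw [List.map_cons, List.prod_cons, ih, hypConj_mul h2 hι]
    simp [transposeWord]
end hyperbolic

/-! ### Polynomials with prescribed initial coefficients -/

section poly
variable {K : Type*} [Field K]

/-- A root `r` of a polynomial with constant term `1` is nonzero, so the factor `1 - r⁻¹ X` can be
split off. -/
lemma exists_list_prod [IsAlgClosed K] (N : ℕ) (B : K[X]) (hN : B.natDegree ≤ N)
    (hB : B.coeff 0 = 1) :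
    ∃ l : List K, B = (l.map fun z => 1 + Polynomial.X * Polynomial.C z).prod := by
  induction N generalizing B with
  | zero =>
    refine ⟨[], ?_⟩
    rw [Polynomial.eq_C_of_natDegree_le_zero hN, hB]; simp
  | succ N ih =>
    by_cases h0 : B.natDegree = 0
    · exact ih B (by omega) hB
    obtain ⟨r, hr⟩ := IsAlgClosed.exists_root B fun h => h0 (Polynomial.natDegree_eq_of_degree_eq_some h)
    obtain ⟨Q, rfl⟩ := Polynomial.dvd_iff_isRoot.2 hr
    have hc : -r * Q.coeff 0 = 1 := by simpa [Polynomial.mul_coeff_zero] using hB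
    have hr0 : r ≠ 0 := by rintro rfl; simp at hc
    have hQ0 : Q ≠ 0 := by rintro rfl; simp at hc
    have hdeg : Q.natDegree ≤ N := by
      rw [Polynomial.natDegree_mul (Polynomial.X_sub_C_ne_zero r) hQ0,
        Polynomial.natDegree_X_sub_C] at hN
      omega
    obtain ⟨l, hl⟩ := ih (Polynomial.C (-r) * Q)
      ((Polynomial.natDegree_C_mul_le _ _).trans hdeg) (by simpa using hc)
    refine ⟨-r⁻¹ :: l, ?_⟩
    rw [List.map_cons, List.prod_cons, ← hl, ← mul_assoc]
    congr 1
    have : Polynomial.C r⁻¹ * Polynomial.C r = 1 := by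
      rw [← Polynomial.C_mul, inv_mul_cancel₀ hr0, Polynomial.C_1]
    simp only [Polynomial.C_neg]
    linear_combination (-Polynomial.X) * this

/-- Square root of a power series with constant term `1`, truncated after degree `N`. -/
lemma exists_sqrt (h2 : (2 : K) ≠ 0) (a : ℕ → K) (ha : a 0 = 1) (N : ℕ) :
    ∃ B : K[X], B.coeff 0 = 1 ∧ ∀ t ≤ N, (B * B).coeff t = a t := by
  induction N with
  | zero => exact ⟨1, by simp, by simp [ha]⟩
  | succ N ih =>
    obtain ⟨B, hB0, hB⟩ := ih
    set c : K := (a (N + 1) - (B * B).coeff (N + 1)) / 2 with hc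
    refine ⟨B + Polynomial.C c * Polynomial.X ^ (N + 1), by simp [hB0], fun t ht => ?_⟩
    have e : (B + Polynomial.C c * Polynomial.X ^ (N + 1)) *
        (B + Polynomial.C c * Polynomial.X ^ (N + 1)) =
        B * B + (Polynomial.C (2 * c) * B +
          Polynomial.C (c * c) * Polynomial.X ^ (N + 1)) * Polynomial.X ^ (N + 1) := by
      simp only [Polynomial.C_mul, show Polynomial.C (2 : K) = 2 from rfl]
      ring
    rw [e, Polynomial.coeff_add, Polynomial.coeff_mul_X_pow']
    rcases ht.lt_or_eq with h | rfl
    · rw [if_neg (by omega), add_zero, hB t (by omega)]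
    · rw [if_pos le_rfl]
      simp [hB0, Polynomial.coeff_X_pow, hc]
      field_simp
      ring

/-- A product `P` of factors `1 + z X` such that `P * P` or `P`, depending on `sq`, has prescribed
coefficients up to degree `N`. A trivial factor `z = 0` makes the list of weights nonempty. -/
lemma exists_list_pow [IsAlgClosed K] (h2 : (2 : K) ≠ 0) (a : ℕ → K) (ha : a 0 = 1) (N : ℕ)
    (sq : Prop) [Decidable sq] :
    ∃ l : List K, l ≠ [] ∧ ∀ t ≤ N,
      ((l.map fun z => 1 + Polynomial.X * Polynomial.C z).prod *
        (if sq then (l.map fun z => 1 + Polynomial.X * Polynomial.C z).prod else 1)).coeff t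
      = a t := by
  split_ifs with h
  · obtain ⟨B, hB0, hB⟩ := exists_sqrt h2 a ha N
    obtain ⟨l, rfl⟩ := exists_list_prod _ B le_rfl hB0
    exact ⟨0 :: l, by simp, by simpa using hB⟩
  · set B : K[X] := ∑ t ∈ Finset.range (N + 1), Polynomial.monomial t (a t) with hBdef
    have hB : ∀ t ≤ N, B.coeff t = a t := fun t ht => by
      simp [hBdef, Polynomial.coeff_monomial, Nat.lt_succ_of_le ht]
    obtain ⟨l, hl⟩ := exists_list_prod _ B le_rfl (by rw [hB 0 (by omega), ha])
    refine ⟨0 :: l, by simp, fun t ht => ?_⟩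
    rw [List.map_cons, List.prod_cons, ← hl, mul_one, Polynomial.C_0, mul_zero, add_zero,
      one_mul, hB t ht]
end poly

/-! ### Realising prescribed invariants -/

section main

lemma map_sigma {R S : Type*} [CommRing R] [CommRing S] (φ : R →+* S) {n : ℕ}
    (X : Matrix (Fin n) (Fin n) R) (t : ℕ) : φ (sigma X t) = sigma (X.map φ) t := by
  unfold sigma
  split_ifs
  · rw [← Polynomial.coeff_map, ← Polynomial.coe_mapRingHom, RingHom.map_det]
    congr 2
    ext i j : 2
    simp [Matrix.one_apply, apply_ite]
  · simp

/-- Evaluating `Ψ_n p` at matrices `M` amounts to substituting the invariants of the matrices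
`M_α` for the symbols `σ_t(α)` in `p`. -/
lemma aeval_Psi {F K : Type*} [Field F] [Field K] [Algebra F K] {n d : ℕ}
    (M : Fin d → Matrix (Fin n) (Fin n) K) (p : NSigma F d) :
    MvPolynomial.aeval (fun x : Fin d × Fin n × Fin n => M x.1 x.2.1 x.2.2) (Psi F n d p) =
      MvPolynomial.aeval (R := F) (fun v : {t : ℕ // 1 ≤ t} × WordClass d =>
        (revDet (((Quot.out v.2).1.map
          fun b => if b.2 then (M b.1)ᵀ else M b.1).prod)).coeff v.1.1) p := by
  set φ : MvPolynomial (Fin d × Fin n × Fin n) F →ₐ[F] K :=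
    MvPolynomial.aeval (fun x : Fin d × Fin n × Fin n => M x.1 x.2.1 x.2.2) with hφ
  have hw : ∀ w : List (Fin d × Bool), (wordMat F n d w).map φ =
      (w.map fun b => if b.2 then (M b.1)ᵀ else M b.1).prod := by
    intro w
    have h := map_list_prod (φ.toRingHom.mapMatrix (m := Fin n)) (w.map (letterMat F n d))
    rw [List.map_map] at h
    refine h.trans (congrArg List.prod (List.map_congr_left fun b _ => ?_))
    ext i j
    by_cases hb : b.2 <;> simp [letterMat, genMat, hb, hφ]
  have hcomp : φ.comp (Psi F n d) = MvPolynomial.aeval (R := F)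
      (fun v : {t : ℕ // 1 ≤ t} × WordClass d =>
        (revDet (((Quot.out v.2).1.map
          fun b => if b.2 then (M b.1)ᵀ else M b.1).prod)).coeff v.1.1) := by
    refine MvPolynomial.algHom_ext fun v => ?_
    refine (congrArg φ (MvPolynomial.aeval_X _ v)).trans
      (Eq.trans ?_ (MvPolynomial.aeval_X _ v).symm)
    rw [← sigma_eq_coeff_revDet, ← hw]
    exact map_sigma φ.toRingHom _ _
  exact DFunLike.congr_fun hcomp p

/-- For finitely many classes, the values of the invariants up to degree `N` can be prescribed
arbitrarily, with `σ_0 = 1`. -/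
lemma exists_matrices {K : Type*} [Field K] [IsAlgClosed K] (h2 : (2 : K) ≠ 0) {d : ℕ}
    (S : Finset (WordClass d)) (hS : S.Nonempty) (N : ℕ) (a : WordClass d → ℕ → K)
    (ha : ∀ c, a c 0 = 1) :
    ∃ n : ℕ, 1 ≤ n ∧ ∃ M : Fin d → Matrix (Fin n) (Fin n) K, ∀ c ∈ S, ∀ t ≤ N,
      (revDet (((Quot.out c).1.map
        fun b => if b.2 then (M b.1)ᵀ else M b.1).prod)).coeff t = a c t := by
  classical
  obtain ⟨ι, hι⟩ := IsAlgClosed.exists_pow_nat_eq (-1 : K) (n := 2) (by norm_num)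
  set r : WordClass d → PrimWord d := Quot.out with hr
  choose l hl0 hl using fun c : WordClass d => exists_list_pow h2 (a c) (ha c) N
    (∃ i, (r c).1.rotate i = transposeWord (r c).1)
  let O := Σ c : S, Fin (l c).length
  let u : O → PrimWord d := fun o => r o.1
  choose y hy using fun o : O =>
    IsAlgClosed.exists_pow_nat_eq (l o.1)[o.2] (u o).length_pos
  set Y := cycMat u y with hY
  -- A word can only be read on the cycles of its own class.
  have key : ∀ (c : S) (w : PrimWord d), Quot.mk (wordRel d) w = c.1 →
      revDet ((w.1.map Y).prod) = if ∃ i, (r c).1.rotate i = w.1 then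
        ((l c).map fun z => 1 + Polynomial.X * Polynomial.C z).prod else 1 := by
    intro c w hw
    rw [hY, revDet_prod_cycMat, Fintype.prod_sigma, Finset.prod_eq_single c]
    · split_ifs with h
      · rw [← Fin.prod_univ_fun_getElem]
        refine Finset.prod_congr rfl fun j _ => ?_
        have hlen : w.1.length = (u ⟨c, j⟩).1.length := by
          obtain ⟨i, hi⟩ := h
          rw [← hi]; simp [u]
        rw [hlen, hy]
        rfl
      · exact Finset.prod_eq_one fun j _ => rfl
    · intro c' _ hc'
      refine Finset.prod_eq_one fun j _ => if_neg ?_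
      rintro ⟨i, hi⟩
      refine hc' (Subtype.ext ?_)
      rw [← hw, ← Quot.out_eq c'.1]
      exact Quot.sound (Or.inl ⟨i, hi⟩)
    · simp
  let V := CycV u ⊕ CycV u
  let e : V ≃ Fin (Fintype.card V) := Fintype.equivFin V
  have hpos : 1 ≤ Fintype.card V := by
    obtain ⟨c, hc⟩ := hS
    have : 0 < (l c).length := List.length_pos_iff.2 (hl0 c)
    exact Fintype.card_pos_iff.2 ⟨Sum.inl ⟨⟨⟨c, hc⟩, ⟨0, this⟩⟩, ⟨0, (r c).length_pos⟩⟩⟩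
  refine ⟨Fintype.card V, hpos,
    fun k => (hypConj ι (Y (k, false)) (Y (k, true))).submatrix e.symm e.symm, fun c hc t ht => ?_⟩
  have hprod : ((r c).1.map fun b : Fin d × Bool =>
      if b.2 then ((hypConj ι (Y (b.1, false)) (Y (b.1, true))).submatrix e.symm e.symm)ᵀ
      else (hypConj ι (Y (b.1, false)) (Y (b.1, true))).submatrix e.symm e.symm).prod =
      (((r c).1.map fun b => hypConj ι (Y b) (Y (b.1, !b.2))).prod).submatrix e.symm e.symm := by
    have h := map_list_prod (Matrix.reindexAlgEquiv K K e)
      ((r c).1.map fun b => hypConj ι (Y b) (Y (b.1, !b.2)))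
    rw [List.map_map] at h
    refine Eq.trans (congrArg List.prod (List.map_congr_left fun b _ => ?_)) h.symm
    obtain ⟨k, _ | _⟩ := b
    · simp
    · simp [Matrix.transpose_submatrix, hypConj_transpose]
  rw [hprod, revDet_reindex, prod_hypConj h2 hι, revDet_hypConj h2 hι]
  have k1 := key ⟨c, hc⟩ (r c) (Quot.out_eq c)
  have k2 := key ⟨c, hc⟩ ⟨transposeWord (r c).1,
    by simpa [transposeWord] using (r c).2.1, (r c).2.2.transposeWord⟩
    ((Quot.sound (r := wordRel d) (Or.inr rfl)).symm.trans (Quot.out_eq c))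
  rw [if_pos ⟨0, List.rotate_zero _⟩] at k1
  rw [k1, k2]
  exact hl c t ht
end main

/-- There are no nonzero free relations for matrix `O(n)`-invariants: an element of
`𝔑_σ` lying in the kernel of `Ψ_n` for every `n ≥ 1` is zero. -/
theorem no_nonzero_free_relations
    (F : Type*) [Field F] [Infinite F] (hF : ringChar F ≠ 2)
    (d : ℕ) (hd : 1 ≤ d) (p : NSigma F d)
    (hp : ∀ n : ℕ, 1 ≤ n → Psi F n d p = 0) :
    p = 0 := by
  classical
  let K := AlgebraicClosure F
  have h2 : (2 : K) ≠ 0 := by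
    have := Ring.two_ne_zero hF
    have h := (map_ne_zero (algebraMap F K)).2 this
    rwa [map_ofNat] at h
  refine MvPolynomial.funext fun a => ?_
  let N := p.vars.sup fun v => v.1.1
  let c₀ : WordClass d := Quot.mk _ ⟨[(⟨0, hd⟩, false)], by simp, primitiveWord_singleton _⟩
  let S : Finset (WordClass d) := insert c₀ (p.vars.image Prod.snd)
  obtain ⟨n, hn, M, hM⟩ := exists_matrices h2 S ⟨c₀, by simp [S]⟩ N
    (fun c t => if ht : 1 ≤ t then algebraMap F K (a (⟨t, ht⟩, c)) else 1) (by simp)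
  have h := aeval_Psi M p
  rw [hp n hn, map_zero] at h
  have h' : MvPolynomial.aeval (R := F) (fun v => algebraMap F K (a v)) p = 0 := by
    rw [h]
    refine MvPolynomial.eval₂Hom_congr' rfl (fun v hv _ => ?_) rfl
    rw [hM v.2 (by simp [S]; right; exact ⟨_, _, hv⟩) v.1.1
      (Finset.le_sup (f := fun v => v.1.1) hv), dif_pos v.1.2]
  refine Eq.trans ?_ (map_zero _).symm
  refine (map_eq_zero (algebraMap F K)).1 ?_
  rw [← h']
  exact (MvPolynomial.aeval_algebraMap_apply K a p).symm
end
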